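/- Let d ≥ 3 and ε ∈ (0,1), fix 1 ≤ r_N ≤ N^{1−ε}, and let A = B(0,r_N) ⊆ B = B(0,N^{1−ε/2}) in T. There exist constants c, c′ > 0 depending only on d and ε such that for all sufficiently large N: sup_{x ∈ ∂_i A} | P_σ[ Y_{H_A} = x ] · cap(𝖠) / e_A(x) − 1 | ≤ c N^{−c′}, where ∂_i A is the internal boundary of A, σ is the quasistationary distribution on T∖B, 𝖠 = φ(A), and e_A(x) = e_𝖠(φ(x)). -/

import Mathlib

open MeasureTheory Filter Classical
open scoped ENNReal NNReal

noncomputable section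

namespace Frag

/-! ### Graph-theoretic basics -/

/-- Two vertices of `Fin d → R` are adjacent if they differ in exactly one
coordinate, by `±1` (Euclidean distance one). -/
def adj {d : ℕ} {R : Type*} [AddGroupWithOne R] (x y : Fin d → R) : Prop :=
  x ≠ y ∧ ∃ i : Fin d, (y i = x i + 1 ∨ x i = y i + 1) ∧ ∀ j : Fin d, j ≠ i → x j = y j

/-- The discrete torus `(ℤ/Nℤ)^d`. -/
abbrev Torus (d N : ℕ) := Fin d → ZMod N

/-- The lattice `ℤ^d`. -/
abbrev Lat (d : ℕ) := Fin d → ℤ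

instance (n : ℕ) : MeasurableSpace (ZMod n) := ⊤

/-- The `ℓ∞`-distance on the torus. -/
def torusDist {d N : ℕ} (x y : Torus d N) : ℕ :=
  Finset.univ.sup fun i : Fin d => min (x i - y i).val (y i - x i).val

/-- The `ℓ∞`-distance on the lattice. -/
def latDist {d : ℕ} (x y : Lat d) : ℕ :=
  Finset.univ.sup fun i : Fin d => (x i - y i).natAbs

/-- Closed `ℓ∞`-ball in the torus. -/
def torusBall {d N : ℕ} (x : Torus d N) (r : ℝ) : Set (Torus d N) :=
  {y | (torusDist x y : ℝ) ≤ r}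

/-- Closed `ℓ∞`-ball in the lattice. -/
def latBall {d : ℕ} (x : Lat d) (r : ℝ) : Set (Lat d) :=
  {y | (latDist x y : ℝ) ≤ r}

/-- `x` and `y` are connected by a nearest-neighbour path staying in `S`. -/
def connectedIn {α : Type*} (rel : α → α → Prop) (S : Set α) (x y : α) : Prop :=
  ∃ (n : ℕ) (p : ℕ → α), p 0 = x ∧ p n = y ∧ (∀ k, k ≤ n → p k ∈ S) ∧
    ∀ k, k < n → rel (p k) (p (k + 1))

/-- The connected component of `x` inside `S`. -/
def compOf {α : Type*} (rel : α → α → Prop) (S : Set α) (x : α) : Set α :=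
  {y | connectedIn rel S x y}

/-- `S` is a connected set. -/
def IsConnSet {α : Type*} (rel : α → α → Prop) (S : Set α) : Prop :=
  ∀ x ∈ S, ∀ y ∈ S, connectedIn rel S x y

/-- External vertex boundary. -/
def extBdry {α : Type*} (rel : α → α → Prop) (S : Set α) : Set α :=
  {y | y ∉ S ∧ ∃ x ∈ S, rel x y}

/-- Internal vertex boundary. -/
def intBdry {α : Type*} (rel : α → α → Prop) (S : Set α) : Set α :=
  {x | x ∈ S ∧ ∃ y, y ∉ S ∧ rel x y}

/-- The cardinality of the largest connected component of `S`. -/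
def maxCompSize {α : Type*} (rel : α → α → Prop) (S : Set α) : ℕ :=
  sSup {n | ∃ x ∈ S, n = (compOf rel S x).ncard}

/-- The diameter of a set with respect to a distance. -/
def diamOf {α : Type*} (dist : α → α → ℕ) (S : Set α) : ℕ :=
  sSup {n | ∃ x ∈ S, ∃ y ∈ S, n = dist x y}

/-- The canonical graph isomorphism `φ` from `B(0, N/4) ⊆ (ℤ/Nℤ)^d` onto
`B(0, N/4) ⊆ ℤ^d`, given by the signed representative of each coordinate. -/
def torusToLat {d N : ℕ} (x : Torus d N) : Lat d :=
  fun i => if ((x i).val : ℝ) ≤ (N : ℝ) / 2 then ((x i).val : ℤ) else ((x i).val : ℤ) - (N : ℤ)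

/-! ### Discrete-time simple random walk -/

/-- One-step transition probability of the simple random walk. -/
def srwStep {d : ℕ} {R : Type*} [AddGroupWithOne R] (x y : Fin d → R) : ℝ≥0∞ :=
  if adj x y then ((2 * d : ℕ) : ℝ≥0∞)⁻¹ else 0

/-- `μ` is the law on path space of the discrete-time simple random walk with
initial distribution `init`, characterized by its cylinder probabilities. -/
def IsWalkLaw {d : ℕ} {R : Type*} [AddGroupWithOne R] [MeasurableSpace R]
    (μ : Measure (ℕ → (Fin d → R))) (init : (Fin d → R) → ℝ≥0∞) : Prop :=
  IsProbabilityMeasure μ ∧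
  ∀ (n : ℕ) (w : ℕ → (Fin d → R)),
    μ {ω | ∀ k, k ≤ n → ω k = w k} =
      init (w 0) * ∏ k ∈ Finset.range n, srwStep (w k) (w (k + 1))

/-- The uniform initial distribution on the torus. -/
def unifInit (d N : ℕ) : Torus d N → ℝ≥0∞ := fun _ => ((N : ℝ≥0∞) ^ d)⁻¹

/-- The initial distribution concentrated at `x`. -/
def pointInit {α : Type*} (x : α) : α → ℝ≥0∞ := fun y => if y = x then 1 else 0

/-- The set of sites visited in the first `t` steps. -/
def visited {α : Type*} (t : ℕ) (ω : ℕ → α) : Set α := {v | ∃ k, k ≤ t ∧ ω k = v}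

/-! ### Capacity and random interlacements on `ℤ^d` -/

/-- The event that the walk never returns to `V` after time `0`. -/
def escEvent {d : ℕ} (V : Set (Lat d)) : Set (ℕ → Lat d) :=
  {w | ∀ n, 1 ≤ n → w n ∉ V}

/-- `r` is the (simple random walk) capacity of `V ⊆ ℤ^d`:
`r = Σ_{x ∈ V} P_x[H̃_V = ∞]`. -/
def IsCap (d : ℕ) (V : Set (Lat d)) (r : ℝ) : Prop :=
  ∃ μ : Lat d → Measure (ℕ → Lat d),
    (∀ x, IsWalkLaw (μ x) (pointInit x)) ∧
    r = ∑ᶠ x ∈ V, ((μ x) (escEvent V)).toReal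

/-- `I` is a random interlacement at level `u` on the probability space `(Ω, P)`:
for every finite `V ⊆ ℤ^d`, `P[I ∩ V = ∅] = exp (−u · cap V)`. -/
def IsInterlacement (d : ℕ) (u : ℝ) {Ω : Type*} [MeasurableSpace Ω]
    (P : Measure Ω) (I : Ω → Set (Lat d)) : Prop :=
  IsProbabilityMeasure P ∧
  (∀ x : Lat d, MeasurableSet {ω | x ∈ I ω}) ∧
  ∀ V : Set (Lat d), V.Finite → ∀ r : ℝ, IsCap d V r →
    P {ω | ∀ x ∈ V, x ∉ I ω} = ENNReal.ofReal (Real.exp (-u * r))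

/-- `e = η(u)`, the probability that the origin lies in an infinite component of
the vacant set `V^u = ℤ^d ∖ I^u` of a random interlacement at level `u`. -/
def IsEta (d : ℕ) (u e : ℝ) : Prop :=
  ∃ (Ω : Type) (_ : MeasurableSpace Ω) (P : Measure Ω) (I : Ω → Set (Lat d)),
    IsInterlacement d u P I ∧
    e = (P {ω | (compOf adj ((I ω)ᶜ) (0 : Lat d)).Infinite}).toReal

/-- The critical level `u_* = inf {u ≥ 0 : η(u) = 0}`. -/
def uStar (d : ℕ) : ℝ := sInf {u | 0 ≤ u ∧ IsEta d u 0}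

/-- The probability of an event `E` about a random interlacement at level `u`. -/
def intProb (d : ℕ) (u : ℝ) (E : Set (Lat d) → Prop) : ℝ :=
  sSup {p | ∃ (Ω : Type) (_ : MeasurableSpace Ω) (P : Measure Ω) (I : Ω → Set (Lat d)),
    IsInterlacement d u P I ∧ p = (P {ω | E (I ω)}).toReal}

/-- The event that `B(0,L)` is connected to the external boundary of `B(0,2L)`
by a nearest-neighbour path in `S`. -/
def connAcross (d L : ℕ) (S : Set (Lat d)) : Prop :=
  ∃ x ∈ latBall (0 : Lat d) (L : ℝ), ∃ y ∈ extBdry adj (latBall (0 : Lat d) (2 * (L : ℝ))),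
    connectedIn adj S x y

/-- The critical level `u_** = inf {u ≥ 0 : α(u) > 0}`. -/
def uStarStar (d : ℕ) : ℝ :=
  sInf {u | 0 ≤ u ∧ ∃ a : ℝ, 0 < a ∧
    Tendsto (fun L : ℕ => (L : ℝ) ^ a * intProb d u fun I => connAcross d L Iᶜ)
      atTop (nhds 0)}

/-- `u` is a strongly supercritical level for random interlacements on `ℤ^d`. -/
def StronglySupercritical (d : ℕ) (u : ℝ) : Prop :=
  ∃ μ : ℝ, 0 < μ ∧
  ∃ (Ω : Type) (_ : MeasurableSpace Ω) (P : Measure Ω) (I : ℝ → Ω → Set (Lat d)),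
    (∀ v : ℝ, 0 ≤ v → IsInterlacement d v P (I v)) ∧
    (∀ v v' : ℝ, v ≤ v' → ∀ ω, I v ω ⊆ I v' ω) ∧
    ∃ N₀ : ℕ, ∀ N : ℕ, N₀ ≤ N →
      (1 - Real.exp (-(N : ℝ) ^ μ) ≤
        (P {ω | ∃ x ∈ latBall (0 : Lat d) (N : ℝ),
          (compOf adj ((I (u * (1 + μ)) ω)ᶜ) x).Infinite}).toReal) ∧
      (1 - Real.exp (-(N : ℝ) ^ μ) ≤
        (P {ω | ∀ S₁ S₂ : Set (Lat d),
            S₁ ⊆ (I (u * (1 - μ)) ω)ᶜ ∩ latBall 0 (N : ℝ) →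
            S₂ ⊆ (I (u * (1 - μ)) ω)ᶜ ∩ latBall 0 (N : ℝ) →
            IsConnSet adj S₁ → IsConnSet adj S₂ →
            (N : ℝ) / 8 ≤ (diamOf latDist S₁ : ℝ) →
            (N : ℝ) / 8 ≤ (diamOf latDist S₂ : ℝ) →
            ∃ x ∈ S₁, ∃ y ∈ S₂,
              connectedIn adj ((I (u * (1 + μ)) ω)ᶜ ∩ latBall 0 (2 * (N : ℝ))) x y}).toReal)

/-! ### Continuous-time walk -/

/-- Sample space for the continuous-time walk: a discrete path together with
the i.i.d. exponential interarrival gaps of the driving Poisson process. -/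
abbrev CTPath (d N : ℕ) := (ℕ → Torus d N) × (ℕ → ℝ)

/-- The number of jumps performed up to time `t`. -/
def nJumps (g : ℕ → ℝ) (t : ℝ) : ℕ := sSup {n | ∑ k ∈ Finset.range n, g k ≤ t}

/-- The position of the continuous-time walk at time `t`. -/
def ctPos {d N : ℕ} (ω : CTPath d N) (t : ℝ) : Torus d N := ω.1 (nJumps ω.2 t)

/-- `ν` is the law of an i.i.d. sequence of exponential random variables of
parameter `1`, characterized by its joint survival function. -/
def IsIIDExp (ν : Measure (ℕ → ℝ)) : Prop :=
  IsProbabilityMeasure ν ∧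
  ∀ (n : ℕ) (s : ℕ → ℝ), (∀ k, 0 ≤ s k) →
    ν {g | ∀ k, k ≤ n → s k < g k} =
      ENNReal.ofReal (Real.exp (-(∑ k ∈ Finset.range (n + 1), s k)))

/-- `P` is the law of the continuous-time simple random walk `Y_t = X_{N_t}`
with initial distribution `init`. -/
def IsCTWalk {d N : ℕ} (P : Measure (CTPath d N)) (init : Torus d N → ℝ≥0∞) : Prop :=
  ∃ (μ : Measure (ℕ → Torus d N)) (ν : Measure (ℕ → ℝ)),
    IsWalkLaw μ init ∧ IsIIDExp ν ∧ P = μ.prod ν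

/-- The entrance time `H_V = inf {t ≥ 0 : Y_t ∈ V}`. -/
def hitT {d N : ℕ} (V : Set (Torus d N)) (ω : CTPath d N) : ℝ :=
  sInf {t | 0 ≤ t ∧ ctPos ω t ∈ V}

/-- The entrance time to `V` after time `s`. -/
def hitTAfter {d N : ℕ} (V : Set (Torus d N)) (ω : CTPath d N) (s : ℝ) : ℝ :=
  sInf {t | s ≤ t ∧ ctPos ω t ∈ V}

/-- The exit time `T_V = inf {t ≥ 0 : Y_t ∉ V}`. -/
def exitT {d N : ℕ} (V : Set (Torus d N)) (ω : CTPath d N) : ℝ :=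
  sInf {t | 0 ≤ t ∧ ctPos ω t ∉ V}

/-- The regeneration time `t_* = (N log N)^2`. -/
def tstar (N : ℕ) : ℝ := ((N : ℝ) * Real.log N) ^ 2

/-- The first time `t ≥ s + t_*` such that the walk has avoided `B` during the
whole interval `[t − t_*, t]`. -/
def uEndAfter {d N : ℕ} (B : Set (Torus d N)) (ω : CTPath d N) (s : ℝ) : ℝ :=
  sInf {t | s + tstar N ≤ t ∧ ∀ r, t - tstar N ≤ r → r ≤ t → ctPos ω r ∉ B}

/-- The successive excursion times `(R_k, U_k)` between `A` and (long absences
from) `B`, with the convention `(R_0, U_0) = (0, 0)`. -/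
def excTimes {d N : ℕ} (A B : Set (Torus d N)) (ω : CTPath d N) : ℕ → ℝ × ℝ
  | 0 => (0, 0)
  | k + 1 =>
      let R := hitTAfter A ω (excTimes A B ω k).2
      (R, uEndAfter B ω R)

/-- The range of the continuous-time walk during the time interval `[a, b]`. -/
def ctRange {d N : ℕ} (ω : CTPath d N) (a b : ℝ) : Set (Torus d N) :=
  {v | ∃ t, a ≤ t ∧ t ≤ b ∧ ctPos ω t = v}

/-! ### The killed walk and the quasistationary distribution -/

/-- The action of the substochastic matrix `P^B` (walk killed on `B`) on a
vector `v`. -/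
def killedMul (d N : ℕ) (B : Set (Torus d N)) (v : Torus d N → ℝ) (x : Torus d N) : ℝ :=
  ∑ᶠ y : Torus d N, if y ∉ B ∧ adj x y then v y / (2 * d) else 0

/-- `l` is an eigenvalue of the killed transition matrix `P^B`. -/
def IsKilledEigenvalue (d N : ℕ) (B : Set (Torus d N)) (l : ℝ) : Prop :=
  ∃ v : Torus d N → ℝ, v ≠ 0 ∧ (∀ x ∈ B, v x = 0) ∧
    ∀ x, x ∉ B → killedMul d N B v x = l * v x

/-- `σ` is the quasistationary distribution on `T ∖ B`: the normalized
non-negative principal (Perron–Frobenius) eigenvector of `P^B`. -/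
def IsQSD (d N : ℕ) (B : Set (Torus d N)) (σ : Torus d N → ℝ) : Prop :=
  (∀ x, 0 ≤ σ x) ∧ (∀ x ∈ B, σ x = 0) ∧ (∑ᶠ x, σ x = 1) ∧
  ∃ l : ℝ, (∀ x, x ∉ B → killedMul d N B σ x = l * σ x) ∧
    ∀ l', IsKilledEigenvalue d N B l' → l' ≤ l

/-- The Dirichlet form of the simple random walk on the torus. -/
def dirichlet (d N : ℕ) (g : Torus d N → ℝ) : ℝ :=
  (1 / 2) * ∑ᶠ x : Torus d N, ∑ᶠ y : Torus d N,
    if adj x y then (g x - g y) ^ 2 / (2 * d * (N : ℝ) ^ d) else 0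

end Frag

namespace Frag

/-! ### Averaging over neighbours and the maximum principle -/

/-- The average of `w` over the `2d` neighbours of `x`. -/
def avg {d : ℕ} {R : Type*} [AddGroupWithOne R] (w : (Fin d → R) → ℝ) (x : Fin d → R) : ℝ :=
  (∑ i : Fin d, (w (x + Pi.single i 1) + w (x - Pi.single i 1))) / (2 * d)

section Avg

variable {d : ℕ} {R : Type*} [AddGroupWithOne R]

theorem avg_mono {v w : (Fin d → R) → ℝ} {x : Fin d → R}
    (h : ∀ i, v (x + Pi.single i 1) ≤ w (x + Pi.single i 1) ∧
      v (x - Pi.single i 1) ≤ w (x - Pi.single i 1)) : avg v x ≤ avg w x := by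
  unfold avg
  have : ∑ i : Fin d, (v (x + Pi.single i 1) + v (x - Pi.single i 1)) ≤
      ∑ i : Fin d, (w (x + Pi.single i 1) + w (x - Pi.single i 1)) :=
    Finset.sum_le_sum fun i _ => add_le_add (h i).1 (h i).2
  gcongr

theorem avg_nonneg {w : (Fin d → R) → ℝ} (h : ∀ x, 0 ≤ w x) (x : Fin d → R) : 0 ≤ avg w x :=
  div_nonneg (Finset.sum_nonneg fun _ _ => add_nonneg (h _) (h _)) (by positivity)

theorem avg_sub (v w : (Fin d → R) → ℝ) (x : Fin d → R) :
    avg (fun y => v y - w y) x = avg v x - avg w x := by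
  unfold avg
  rw [← sub_div, ← Finset.sum_sub_distrib]
  congr 1
  exact Finset.sum_congr rfl fun i _ => by ring

theorem avg_const_mul (c : ℝ) (w : (Fin d → R) → ℝ) (x : Fin d → R) :
    avg (fun y => c * w y) x = c * avg w x := by
  unfold avg
  rw [mul_div_assoc', Finset.mul_sum]
  congr 1
  exact Finset.sum_congr rfl fun i _ => by ring

theorem avg_const (hd : 0 < d) (c : ℝ) (x : Fin d → R) : avg (fun _ => c) x = c := by
  unfold avg
  have : (d : ℝ) ≠ 0 := by positivity
  simp
  field_simp
  ring

theorem le_avg_add {w : (Fin d → R) → ℝ} (h : ∀ x, 0 ≤ w x) (x : Fin d → R) (i : Fin d) :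
    w (x + Pi.single i 1) / (2 * d) ≤ avg w x := by
  unfold avg
  gcongr
  exact (le_add_of_nonneg_right (h _)).trans
    (Finset.single_le_sum (f := fun i : Fin d => w (x + Pi.single i 1) + w (x - Pi.single i 1))
      (fun _ _ => add_nonneg (h _) (h _)) (Finset.mem_univ i))

theorem le_avg_sub {w : (Fin d → R) → ℝ} (h : ∀ x, 0 ≤ w x) (x : Fin d → R) (i : Fin d) :
    w (x - Pi.single i 1) / (2 * d) ≤ avg w x := by
  unfold avg
  gcongr
  exact (le_add_of_nonneg_left (h _)).trans
    (Finset.single_le_sum (f := fun i : Fin d => w (x + Pi.single i 1) + w (x - Pi.single i 1))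
      (fun _ _ => add_nonneg (h _) (h _)) (Finset.mem_univ i))

theorem avg_comp_translate {w : Lat d → ℝ} (c x : Lat d) :
    avg (fun y => w (y + c)) x = avg w (x + c) := by
  unfold avg
  congr 1
  refine Finset.sum_congr rfl fun i _ => ?_
  beta_reduce
  rw [add_right_comm, sub_add_eq_add_sub]

end Avg

section Lattice

variable {d : ℕ}

theorem avg_sum_coord (hd : 0 < d) (φ : Fin d → ℤ → ℝ) (x : Lat d) :
    avg (fun y => ∑ j, φ j (y j)) x = ∑ j, φ j (x j) +
      (∑ j, (φ j (x j + 1) + φ j (x j - 1) - 2 * φ j (x j))) / (2 * d) := by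
  have key : ∀ (i : Fin d) (t : ℤ), ∑ j, φ j ((x + Pi.single i t : Lat d) j) =
      ∑ j, φ j (x j) + (φ i (x i + t) - φ i (x i)) := by
    intro i t
    rw [← sub_eq_iff_eq_add', ← Finset.sum_sub_distrib, Finset.sum_eq_single i]
    · simp
    · intro j _ hj
      simp [hj]
    · simp
  have hd' : (d : ℝ) ≠ 0 := by positivity
  unfold avg
  have h2 : ∀ i, ∑ j, φ j ((x + Pi.single i 1 : Lat d) j) +
      ∑ j, φ j ((x - Pi.single i 1 : Lat d) j) =
      2 * ∑ j, φ j (x j) + (φ i (x i + 1) + φ i (x i - 1) - 2 * φ i (x i)) := by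
    intro i
    rw [sub_eq_add_neg x, ← Pi.single_neg, key, key, ← sub_eq_add_neg (x i)]
    ring
  rw [Finset.sum_congr rfl fun i _ => h2 i, Finset.sum_add_distrib]
  simp only [Finset.sum_const, Finset.card_univ, Fintype.card_fin, nsmul_eq_mul]
  field_simp

/-- Maximum principle for functions subharmonic where they are positive. -/
theorem nonpos_of_le_avg (hd : 0 < d) {D : Set (Lat d)} (hD : D.Finite) {w : Lat d → ℝ}
    (h : ∀ x ∈ D, 0 < w x → w x ≤ avg w x ∧
      ∀ i, (x + Pi.single i 1 ∉ D → w (x + Pi.single i 1) ≤ 0) ∧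
        (x - Pi.single i 1 ∉ D → w (x - Pi.single i 1) ≤ 0)) :
    ∀ x ∈ D, w x ≤ 0 := by
  by_contra! hcon
  obtain ⟨x₀, hx₀, hpos₀⟩ := hcon
  obtain ⟨y, hy, hymax⟩ := Set.exists_max_image D w hD ⟨x₀, hx₀⟩
  let i₀ : Fin d := ⟨0, hd⟩
  obtain ⟨z, ⟨hz, hzy⟩, hzmax⟩ := Set.exists_max_image {z | z ∈ D ∧ w z = w y} (fun z => z i₀)
    (hD.subset fun z hz => hz.1) ⟨y, hy, rfl⟩
  have hpos : 0 < w z := hzy ▸ hpos₀.trans_le (hymax _ hx₀)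
  obtain ⟨hsub, hbd⟩ := h z hz hpos
  have hle : ∀ x, (x ∉ D → w x ≤ 0) → w x ≤ w z := fun x hx => by
    by_cases hxD : x ∈ D
    · exact hzy ▸ hymax x hxD
    · exact (hx hxD).trans hpos.le
  have hlt : w (z + Pi.single i₀ 1) < w z := by
    by_cases hxD : z + Pi.single i₀ 1 ∈ D
    · refine lt_of_le_of_ne (hle _ (hbd i₀).1) fun heq => ?_
      have := hzmax _ ⟨hxD, heq.trans hzy⟩
      simp at this
    · exact ((hbd i₀).1 hxD).trans_lt hpos
  have hsum : ∑ i : Fin d, (w (z + Pi.single i 1) + w (z - Pi.single i 1)) <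
      ∑ _i : Fin d, (w z + w z) :=
    Finset.sum_lt_sum (fun i _ => add_le_add (hle _ (hbd i).1) (hle _ (hbd i).2))
      ⟨i₀, Finset.mem_univ _, add_lt_add_of_lt_of_le hlt (hle _ (hbd i₀).2)⟩
  have hd' : (0 : ℝ) < 2 * d := by positivity
  unfold avg at hsub
  rw [le_div_iff₀ hd'] at hsub
  simp only [Finset.sum_const, Finset.card_univ, Fintype.card_fin, nsmul_eq_mul] at hsum
  nlinarith

/-- Comparison principle: a subharmonic function lies below a superharmonic one if it does so on
the boundary. -/
theorem le_of_le_avg (hd : 0 < d) {D : Set (Lat d)} (hD : D.Finite) {v w : Lat d → ℝ}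
    (hv : ∀ x ∈ D, v x ≤ avg v x) (hw : ∀ x ∈ D, avg w x ≤ w x)
    (hbd : ∀ x ∈ D, ∀ i, (x + Pi.single i 1 ∉ D → v (x + Pi.single i 1) ≤ w (x + Pi.single i 1)) ∧
        (x - Pi.single i 1 ∉ D → v (x - Pi.single i 1) ≤ w (x - Pi.single i 1))) :
    ∀ x ∈ D, v x ≤ w x := by
  have := nonpos_of_le_avg hd hD (w := fun x => v x - w x) fun x hx _ => by
    refine ⟨?_, fun i => ⟨fun h => ?_, fun h => ?_⟩⟩
    · rw [avg_sub]
      linarith [hv x hx, hw x hx]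
    · linarith [(hbd x hx i).1 h]
    · linarith [(hbd x hx i).2 h]
  intro x hx
  linarith [this x hx]

/-- The cube of radius `L` around the origin of `ℤ^d`. -/
def cube (d L : ℕ) : Set (Lat d) := {x | ∀ i, |x i| ≤ (L : ℤ)}

theorem finite_cube (L : ℕ) : (cube d L).Finite := by
  refine (Set.finite_Icc (fun _ : Fin d => -(L : ℤ)) (fun _ => (L : ℤ))).subset fun x hx => ?_
  exact ⟨fun i => (abs_le.1 (hx i)).1, fun i => (abs_le.1 (hx i)).2⟩

theorem cube_mono {L L' : ℕ} (h : L ≤ L') : cube d L ⊆ cube d L' :=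
  fun _ hx i => (hx i).trans (by exact_mod_cast h)

theorem zero_mem_cube (L : ℕ) : (0 : Lat d) ∈ cube d L := fun i => by simp

theorem abs_add_single_sub_le (x : Lat d) (i j : Fin d) :
    |(x + Pi.single i 1 : Lat d) j - x j| ≤ 1 ∧ |(x - Pi.single i 1 : Lat d) j - x j| ≤ 1 := by
  by_cases h : j = i
  · subst h
    simp
  · simp [h]

theorem add_single_mem_cube {L : ℕ} {x : Lat d} (hx : x ∈ cube d L) (i : Fin d) :
    x + Pi.single i 1 ∈ cube d (L + 1) := fun j => by
  have h1 := abs_le.1 (abs_add_single_sub_le x i j).1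
  have h2 := abs_le.1 (hx j)
  rw [abs_le]
  push_cast
  constructor <;> linarith

theorem sub_single_mem_cube {L : ℕ} {x : Lat d} (hx : x ∈ cube d L) (i : Fin d) :
    x - Pi.single i 1 ∈ cube d (L + 1) := fun j => by
  have h1 := abs_le.1 (abs_add_single_sub_le x i j).2
  have h2 := abs_le.1 (hx j)
  rw [abs_le]
  push_cast
  constructor <;> linarith

/-- Reflection of the `i`-th coordinate about `m / 2`. -/
def reflect (i : Fin d) (m : ℤ) (x : Lat d) : Lat d := Function.update x i (m - x i)

theorem reflect_apply_of_ne {i j : Fin d} (h : j ≠ i) (m : ℤ) (x : Lat d) :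
    reflect i m x j = x j := by simp [reflect, h]

theorem reflect_apply_self (i : Fin d) (m : ℤ) (x : Lat d) :
    reflect i m x i = m - x i := by simp [reflect]

theorem reflect_add_single_self (i : Fin d) (m t : ℤ) (x : Lat d) :
    reflect i m (x + Pi.single i t) = reflect i m x - Pi.single i t := by
  ext j
  by_cases h : j = i
  · subst h
    simp [reflect]
    ring
  · simp [reflect, h]

theorem reflect_add_single_of_ne {i k : Fin d} (hk : k ≠ i) (m t : ℤ) (x : Lat d) :
    reflect i m (x + Pi.single k t) = reflect i m x + Pi.single k t := by
  ext j
  by_cases h : j = i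
  · subst h
    simp [reflect, hk.symm]
  · by_cases h' : j = k
    · subst h'
      simp [reflect, h]
    · simp [reflect, h, h']

theorem avg_comp_reflect (w : Lat d → ℝ) (i : Fin d) (m : ℤ) (x : Lat d) :
    avg (fun y => w (reflect i m y)) x = avg w (reflect i m x) := by
  unfold avg
  congr 1
  refine Finset.sum_congr rfl fun k _ => ?_
  beta_reduce
  rw [sub_eq_add_neg x, ← Pi.single_neg]
  by_cases h : k = i
  · subst h
    rw [reflect_add_single_self, reflect_add_single_self, Pi.single_neg, sub_neg_eq_add, add_comm]
  · rw [reflect_add_single_of_ne h, reflect_add_single_of_ne h, Pi.single_neg, ← sub_eq_add_neg]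
end Lattice

/-! ### Gradient estimate for bounded harmonic functions -/

section Gradient

variable {d : ℕ}

/-- One-coordinate summands of the harmonic polynomial used as barrier in the reflection
argument. -/
def reflectBarrier (L : ℕ) (i : Fin d) (m : ℤ) (j : Fin d) (t : ℤ) : ℝ :=
  if j = i then 4 * d * (L + 1) * (2 * t - m + 2) - (d - 1) * (2 * t - m) ^ 2 else 4 * (t : ℝ) ^ 2

theorem avg_reflectBarrier (hd : 0 < d) (L : ℕ) (i : Fin d) (m : ℤ) (x : Lat d) :
    avg (fun y => ∑ j, reflectBarrier L i m j (y j)) x = ∑ j, reflectBarrier L i m j (x j) := by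
  rw [avg_sum_coord hd]
  have : ∀ j, reflectBarrier L i m j (x j + 1) + reflectBarrier L i m j (x j - 1) -
      2 * reflectBarrier L i m j (x j) = 8 + if j = i then -(8 * d : ℝ) else 0 := by
    intro j
    unfold reflectBarrier
    split_ifs
    · push_cast
      ring
    · push_cast
      ring
  rw [Finset.sum_congr rfl fun j _ => this j, Finset.sum_add_distrib, Finset.sum_ite_eq']
  simp
  left
  ring

theorem reflectBarrier_self_nonneg {l s : ℝ} (hd : 0 < d) (hl : 1 ≤ l) (hs : -1 ≤ s)
    (hs' : s ≤ 3 * l) : 0 ≤ 4 * d * l * (s + 2) - (d - 1) * s ^ 2 := by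
  have hd' : (1 : ℝ) ≤ d := by exact_mod_cast hd
  have h1 : s ^ 2 ≤ 3 * l * (s + 2) := by
    rcases le_total 0 s with h | h
    · nlinarith
    · nlinarith
  have h2 : 0 ≤ l * (s + 2) := by nlinarith
  nlinarith [mul_le_mul_of_nonneg_left h1 (sub_nonneg.2 hd'), mul_nonneg (sub_nonneg.2 hd') h2]

theorem le_reflectBarrier_self {l s : ℝ} (hd : 0 < d) (hl : 1 ≤ l) (hs : l ≤ s)
    (hs' : s ≤ 3 * l) : 4 * l ^ 2 ≤ 4 * d * l * (s + 2) - (d - 1) * s ^ 2 := by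
  have hd' : (1 : ℝ) ≤ d := by exact_mod_cast hd
  have h1 : s ^ 2 ≤ 3 * l * s := by nlinarith
  have h2 : l ^ 2 ≤ l * s := by nlinarith
  have h3 : (1 : ℝ) * (l * s) ≤ d * (l * s) := by gcongr; nlinarith
  nlinarith [mul_le_mul_of_nonneg_left h1 (sub_nonneg.2 hd')]

theorem sum_reflectBarrier_nonneg (hd : 0 < d) {L : ℕ} {i : Fin d} {m : ℤ} (hm : |m| ≤ L)
    {z : Lat d} (hz : z ∈ cube d (L + 1)) (hzm : m - 1 ≤ 2 * z i) :
    0 ≤ ∑ j, reflectBarrier L i m j (z j) ∧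
      (z ∉ cube d L → 4 * ((L : ℝ) + 1) ^ 2 ≤ ∑ j, reflectBarrier L i m j (z j)) := by
  have hl : (1 : ℝ) ≤ (L : ℝ) + 1 := by simp
  have hm' := abs_le.1 hm
  have hzi := abs_le.1 (hz i)
  have hs : (-1 : ℝ) ≤ 2 * z i - m := by
    have : (-1 : ℤ) ≤ 2 * z i - m := by linarith
    exact_mod_cast this
  have hs' : (2 * z i - m : ℝ) ≤ 3 * ((L : ℝ) + 1) := by
    have : 2 * z i - m ≤ 3 * ((L : ℤ) + 1) := by push_cast at hzi; linarith
    exact_mod_cast this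
  have hnn : ∀ j, 0 ≤ reflectBarrier L i m j (z j) := by
    intro j
    unfold reflectBarrier
    split_ifs with h
    · subst h
      exact reflectBarrier_self_nonneg hd hl hs hs'
    · positivity
  refine ⟨Finset.sum_nonneg fun j _ => hnn j, fun hzL => ?_⟩
  simp only [cube, Set.mem_ofPred_eq, not_forall, not_le] at hzL
  obtain ⟨j, hj⟩ := hzL
  refine le_trans ?_ (Finset.single_le_sum (fun j _ => hnn j) (Finset.mem_univ j))
  unfold reflectBarrier
  split_ifs with h
  · subst h
    have hpos : (L : ℤ) < z j := by
      rcases lt_abs.1 hj with h | h <;> linarith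
    refine le_reflectBarrier_self hd hl ?_ hs'
    have : (L : ℤ) + 1 ≤ 2 * z j - m := by linarith
    exact_mod_cast this
  · have h1 : ((L : ℝ) + 1) ≤ |(z j : ℝ)| := by
      have : (L : ℤ) + 1 ≤ |z j| := hj
      exact_mod_cast this
    rw [← sq_abs (z j : ℝ)]
    gcongr

theorem sub_reflect_le (hd : 0 < d) {L : ℕ} {w : Lat d → ℝ} {M : ℝ}
    (hw : ∀ x ∈ cube d (2 * L), avg w x = w x) (h0 : ∀ x ∈ cube d (2 * L + 1), 0 ≤ w x)
    (hM : ∀ x ∈ cube d (2 * L + 1), w x ≤ M) {i : Fin d} {m : ℤ} (hm : |m| ≤ L)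
    {y : Lat d} (hy : y ∈ cube d L) (hym : m < 2 * y i) :
    4 * ((L : ℝ) + 1) ^ 2 * (w y - w (reflect i m y)) ≤
      M * ∑ j, reflectBarrier L i m j (y j) := by
  have hm' := abs_le.1 hm
  have hM0 : 0 ≤ M := (h0 0 (zero_mem_cube _)).trans (hM 0 (zero_mem_cube _))
  set F : Lat d → ℝ := fun x => 4 * ((L : ℝ) + 1) ^ 2 * (w x - w (reflect i m x)) -
      M * ∑ j, reflectBarrier L i m j (x j) with hF
  have hrefl : ∀ {K : ℕ} {x : Lat d}, x ∈ cube d K → L ≤ K → m - 1 ≤ 2 * x i →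
      reflect i m x ∈ cube d (L + K) := by
    intro K x hx hLK hxm j
    have hxj := abs_le.1 (hx j)
    have hLK' : (L : ℤ) ≤ K := by exact_mod_cast hLK
    push_cast
    by_cases h : j = i
    · subst h
      rw [reflect_apply_self, abs_le]
      constructor <;> omega
    · rw [reflect_apply_of_ne h, abs_le]
      constructor <;> linarith
  suffices h : ∀ x ∈ {x | x ∈ cube d L ∧ m < 2 * x i}, F x ≤ 0 from
    sub_nonpos.1 (h y ⟨hy, hym⟩)
  refine nonpos_of_le_avg hd ((finite_cube L).subset fun x hx => hx.1) fun x hx hpos => ?_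
  obtain ⟨hxL, hxm⟩ := hx
  have hbd : ∀ (k : Fin d) (t : ℤ), (t = 1 ∨ t = -1) → x + Pi.single k t ∈ cube d (L + 1) →
      x + Pi.single k t ∉ {x | x ∈ cube d L ∧ m < 2 * x i} → F (x + Pi.single k t) ≤ 0 := by
    intro k t ht hz hzD
    have hzi : m - 1 ≤ 2 * (x + Pi.single k t : Lat d) i := by
      by_cases h : i = k
      · subst h
        simp only [Pi.add_apply, Pi.single_eq_same]
        omega
      · simp only [Pi.add_apply, Pi.single_eq_of_ne h]
        omega
    obtain ⟨hb0, hb1⟩ := sum_reflectBarrier_nonneg hd hm hz hzi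
    by_cases hzL : x + Pi.single k t ∈ cube d L
    · have hzm : 2 * (x + Pi.single k t : Lat d) i ≤ m := not_lt.1 fun h => hzD ⟨hzL, h⟩
      have hV : w (x + Pi.single k t) - w (reflect i m (x + Pi.single k t)) ≤ 0 := by
        rcases eq_or_lt_of_le hzm with heq | hlt
        · have : reflect i m (x + Pi.single k t) = x + Pi.single k t := by
            ext j
            by_cases h : j = i
            · subst h
              rw [reflect_apply_self]
              linarith
            · rw [reflect_apply_of_ne h]
          rw [this, sub_self]
        · have hki : k = i := by
            by_contra h
            rw [Pi.add_apply, Pi.single_eq_of_ne (Ne.symm h)] at hlt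
            omega
          subst hki
          simp only [Pi.add_apply, Pi.single_eq_same] at hlt hzi
          have ht1 : t = -1 := by omega
          have hre : reflect k m x = x + Pi.single k t := by
            ext j
            by_cases h : j = k
            · subst h
              rw [reflect_apply_self]
              simp
              omega
            · rw [reflect_apply_of_ne h]
              simp [h]
          have hre' : reflect k m (x + Pi.single k t) = x := by
            rw [← hre]
            ext j
            by_cases h : j = k
            · subst h
              simp [reflect_apply_self]
            · simp [reflect_apply_of_ne h]
          rw [hre']
          have hΨ := (sum_reflectBarrier_nonneg hd hm (cube_mono (Nat.le_succ L) hxL)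
            (by linarith : m - 1 ≤ 2 * x k)).1
          have h3 : 0 < 4 * ((L : ℝ) + 1) ^ 2 * (w x - w (x + Pi.single k t)) := by
            have := mul_nonneg hM0 hΨ
            simp only [hF, hre] at hpos
            linarith
          have := pos_of_mul_pos_right h3 (by positivity)
          linarith
      have h1 : 4 * ((L : ℝ) + 1) ^ 2 *
          (w (x + Pi.single k t) - w (reflect i m (x + Pi.single k t))) ≤ 0 :=
        mul_nonpos_of_nonneg_of_nonpos (by positivity) hV
      have := mul_nonneg hM0 hb0
      simp only [hF]
      linarith
    · have h1 := mul_le_mul_of_nonneg_left (hb1 hzL) hM0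
      have h2 : w (x + Pi.single k t) - w (reflect i m (x + Pi.single k t)) ≤ M := by
        have := hM _ (cube_mono (by omega) hz)
        have := h0 _ (cube_mono (by omega) (hrefl hz (Nat.le_succ L) hzi))
        linarith
      have h3 := mul_le_mul_of_nonneg_left h2 (by positivity : 0 ≤ 4 * ((L : ℝ) + 1) ^ 2)
      simp only [hF]
      linarith
  refine ⟨?_, fun k => ⟨fun h => hbd k 1 (Or.inl rfl) (add_single_mem_cube hxL k) h, fun h => ?_⟩⟩
  · have h1 := hw x (cube_mono (by omega) hxL)
    have h2 := hw _ (cube_mono (by omega) (hrefl hxL le_rfl (by linarith)))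
    have h3 : avg F x = F x := by
      simp only [hF]
      rw [avg_sub, avg_const_mul, avg_const_mul, avg_sub, avg_comp_reflect, h1, h2,
        avg_reflectBarrier hd]
    exact h3.ge
  · have hsub := sub_single_mem_cube hxL k
    rw [sub_eq_add_neg, ← Pi.single_neg] at h hsub ⊢
    exact hbd k (-1) (Or.inr rfl) hsub h

theorem abs_sub_reflect_le (hd : 0 < d) {L : ℕ} {w : Lat d → ℝ} {M : ℝ}
    (hw : ∀ x ∈ cube d (2 * L), avg w x = w x) (h0 : ∀ x ∈ cube d (2 * L + 1), 0 ≤ w x)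
    (hM : ∀ x ∈ cube d (2 * L + 1), w x ≤ M) {i : Fin d} {m : ℤ} (hm : |m| ≤ L)
    {y : Lat d} (hy : y ∈ cube d L) (hym : m < 2 * y i) :
    4 * ((L : ℝ) + 1) ^ 2 * |w y - w (reflect i m y)| ≤
      M * ∑ j, reflectBarrier L i m j (y j) := by
  have h1 := sub_reflect_le hd hw h0 hM hm hy hym
  have h2 := sub_reflect_le (w := fun x => M - w x) hd
    (fun x hx => by rw [avg_sub, avg_const hd, hw x hx]) (fun x hx => sub_nonneg.2 (hM x hx))
    (fun x hx => sub_le_self M (h0 x hx)) hm hy hym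
  rcases abs_cases (w y - w (reflect i m y)) with ⟨h, -⟩ | ⟨h, -⟩
  · rw [h]
    exact h1
  · rw [h]
    convert h2 using 2
    ring

theorem sum_reflectBarrier_le (hd : 0 < d) {L ρ : ℕ} (hρ : ρ ≤ L) {i : Fin d} {m : ℤ} {y : Lat d}
    (hy : y ∈ cube d ρ) (hm : 1 ≤ 2 * y i - m) (hm' : 2 * y i - m ≤ ρ) :
    ∑ j, reflectBarrier L i m j (y j) ≤ 16 * d * (L + 1) * ρ := by
  have hd' : (1 : ℝ) ≤ d := by exact_mod_cast hd
  have hρL : (ρ : ℝ) ≤ (L : ℝ) := by exact_mod_cast hρ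
  have hterm : ∀ j, reflectBarrier L i m j (y j) ≤
      4 * (L + 1) * ρ + if j = i then 12 * d * (L + 1) * (ρ : ℝ) else 0 := by
    intro j
    unfold reflectBarrier
    split_ifs with h
    · subst h
      have h1 : (1 : ℝ) ≤ 2 * y j - m := by exact_mod_cast hm
      have h2 : (2 * y j - m : ℝ) ≤ ρ := by exact_mod_cast hm'
      have h3 : (2 * y j - m + 2 : ℝ) ≤ 3 * ρ := by linarith
      have h4 : 0 ≤ ((d : ℝ) - 1) * (2 * y j - m) ^ 2 := mul_nonneg (by linarith) (sq_nonneg _)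
      have h5 := mul_le_mul_of_nonneg_left h3 (by positivity : 0 ≤ 4 * (d : ℝ) * ((L : ℝ) + 1))
      have h6 : 0 ≤ 4 * ((L : ℝ) + 1) * ρ := by positivity
      linarith
    · have h1 : |(y j : ℝ)| ≤ ρ := by exact_mod_cast hy j
      have h2 : (y j : ℝ) ^ 2 ≤ (ρ : ℝ) ^ 2 := sq_le_sq' (abs_le.1 h1).1 (abs_le.1 h1).2
      have h3 : (0 : ℝ) ≤ ρ := by positivity
      nlinarith
  refine (Finset.sum_le_sum fun j _ => hterm j).trans ?_
  rw [Finset.sum_add_distrib, Finset.sum_ite_eq']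
  simp
  linarith

theorem abs_sub_update_zero_le (hd : 0 < d) {L ρ : ℕ} (hρ : ρ ≤ L) {w : Lat d → ℝ} {M : ℝ}
    (hw : ∀ x ∈ cube d (2 * L), avg w x = w x) (h0 : ∀ x ∈ cube d (2 * L + 1), 0 ≤ w x)
    (hM : ∀ x ∈ cube d (2 * L + 1), w x ≤ M) {y : Lat d} (hy : y ∈ cube d ρ) (i : Fin d) :
    |w y - w (Function.update y i 0)| ≤ 4 * d * M * ρ / (L + 1) := by
  have hM0 : 0 ≤ M := (h0 0 (zero_mem_cube _)).trans (hM 0 (zero_mem_cube _))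
  have hl : (0 : ℝ) < (L : ℝ) + 1 := by positivity
  have hyi := abs_le.1 (hy i)
  have hρL : (ρ : ℤ) ≤ L := by exact_mod_cast hρ
  have finish : ∀ a : ℝ, ∀ z ∈ cube d ρ, 1 ≤ 2 * z i - y i → 2 * z i - y i ≤ ρ →
      4 * ((L : ℝ) + 1) ^ 2 * a ≤ M * ∑ j, reflectBarrier L i (y i) j (z j) →
      a ≤ 4 * d * M * ρ / (L + 1) := by
    intro a z hz h1 h2 h3
    have h4 := mul_le_mul_of_nonneg_left (sum_reflectBarrier_le hd hρ hz h1 h2) hM0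
    rw [le_div_iff₀ hl]
    have h5 : (4 * ((L : ℝ) + 1)) * (a * (L + 1)) ≤ (4 * ((L : ℝ) + 1)) * (4 * d * M * ρ) := by
      linarith
    exact le_of_mul_le_mul_left h5 (by positivity)
  rcases lt_trichotomy (y i) 0 with h | h | h
  · have hz : Function.update y i 0 ∈ cube d ρ := fun j => by
      by_cases hj : j = i
      · subst hj
        simp
      · simpa [hj] using hy j
    have hr : reflect i (y i) (Function.update y i 0) = y := by
      ext j
      by_cases hj : j = i
      · subst hj
        simp [reflect_apply_self]
      · simp [reflect_apply_of_ne hj, hj]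
    have := abs_sub_reflect_le hd hw h0 hM (i := i) (m := y i) ((hy i).trans hρL) (cube_mono hρ hz)
      (by simpa using h)
    rw [hr, abs_sub_comm] at this
    exact finish _ _ hz (by simp; omega) (by simp; omega) this
  · rw [← h, Function.update_eq_self, sub_self, abs_zero]
    positivity
  · have hr : reflect i (y i) y = Function.update y i 0 := by
      ext j
      by_cases hj : j = i
      · subst hj
        simp [reflect_apply_self]
      · simp [reflect_apply_of_ne hj, hj]
    have := abs_sub_reflect_le hd hw h0 hM (m := y i) ((hy i).trans hρL) (cube_mono hρ hy)
      (by linarith)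
    rw [hr] at this
    exact finish _ _ hy (by omega) (by omega) this

/-- Gradient estimate for bounded non-negative harmonic functions on a cube. -/
theorem abs_sub_zero_le (hd : 0 < d) {L ρ : ℕ} (hρ : ρ ≤ L) {w : Lat d → ℝ} {M : ℝ}
    (hw : ∀ x ∈ cube d (2 * L), avg w x = w x) (h0 : ∀ x ∈ cube d (2 * L + 1), 0 ≤ w x)
    (hM : ∀ x ∈ cube d (2 * L + 1), w x ≤ M) {y : Lat d} (hy : y ∈ cube d ρ) :
    |w y - w 0| ≤ 4 * d ^ 2 * M * ρ / (L + 1) := by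
  have key : ∀ s : Finset (Fin d),
      |w y - w (fun j => if j ∈ s then 0 else y j)| ≤ s.card * (4 * d * M * ρ / (L + 1)) := by
    intro s
    induction s using Finset.induction_on with
    | empty => simp
    | insert i s hi ih =>
      set z : Lat d := fun j => if j ∈ s then 0 else y j with hz
      have hzc : z ∈ cube d ρ := fun j => by
        simp only [hz]
        split_ifs
        · simp
        · exact hy j
      have hup : (fun j => if j ∈ insert i s then 0 else y j) = Function.update z i 0 := by
        ext j
        by_cases hj : j = i
        · subst hj
          simp
        · simp [hj, hz]
      have h1 := abs_sub_update_zero_le hd hρ hw h0 hM hzc i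
      rw [hup, Finset.card_insert_of_notMem hi]
      push_cast
      have h2 := abs_sub_le (w y) (w z) (w (Function.update z i 0))
      linarith
  have h := key Finset.univ
  simp only [Finset.mem_univ, if_true, Finset.card_univ, Fintype.card_fin] at h
  refine h.trans (le_of_eq ?_)
  ring

end Gradient

/-! ### Power-law barriers -/

section Barrier

variable {d : ℕ}

/-- The squared Euclidean norm on `ℤ^d`. -/
def nsq (x : Lat d) : ℝ := ∑ i, (x i : ℝ) ^ 2

theorem nsq_nonneg (x : Lat d) : 0 ≤ nsq x := Finset.sum_nonneg fun _ _ => sq_nonneg _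

theorem sq_le_nsq (x : Lat d) (i : Fin d) : (x i : ℝ) ^ 2 ≤ nsq x :=
  Finset.single_le_sum (f := fun i => (x i : ℝ) ^ 2) (fun _ _ => sq_nonneg _) (Finset.mem_univ i)

theorem nsq_le_of_mem_cube {x : Lat d} {L : ℕ} (hx : x ∈ cube d L) :
    nsq x ≤ d * (L : ℝ) ^ 2 := by
  have h : ∀ i ∈ Finset.univ, (x i : ℝ) ^ 2 ≤ (L : ℝ) ^ 2 := fun i _ => by
    have h1 : |(x i : ℝ)| ≤ L := by exact_mod_cast hx i
    exact sq_le_sq' (abs_le.1 h1).1 (abs_le.1 h1).2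
  refine (Finset.sum_le_card_nsmul _ _ _ h).trans (le_of_eq ?_)
  simp

theorem nsq_add_single (x : Lat d) (i : Fin d) (t : ℤ) :
    nsq (x + Pi.single i t) = nsq x + t ^ 2 + 2 * t * x i := by
  unfold nsq
  rw [add_assoc, ← sub_eq_iff_eq_add', ← Finset.sum_sub_distrib, Finset.sum_eq_single i]
  · simp
    ring
  · intro j _ hj
    simp [hj]
  · simp

theorem nsq_add_single_one (x : Lat d) (i : Fin d) :
    nsq (x + Pi.single i 1) = nsq x + 1 + 2 * x i := by
  rw [nsq_add_single]
  simp

theorem nsq_sub_single_one (x : Lat d) (i : Fin d) :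
    nsq (x - Pi.single i 1) = nsq x + 1 - 2 * x i := by
  rw [sub_eq_add_neg, ← Pi.single_neg, nsq_add_single]
  push_cast
  ring

theorem sum_sq_eq_nsq (x : Lat d) : ∑ i, (x i : ℝ) ^ 2 = nsq x := rfl

theorem div_four_le_nsq {S a : ℝ} (hS : 4 ≤ S) (ha : a ^ 2 ≤ S) :
    S / 4 ≤ S + 1 + 2 * a ∧ S / 4 ≤ S + 1 - 2 * a := by
  have h := abs_le_of_sq_le_sq (show (2 * a) ^ 2 ≤ (3 * S / 4 + 1) ^ 2 by nlinarith) (by linarith)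
  have := abs_le.1 h
  constructor <;> linarith

theorem one_add_sq_div_two_le_cosh (y : ℝ) : 1 + y ^ 2 / 2 ≤ Real.cosh y := by
  have h1 : Real.cosh y = 1 + 2 * Real.sinh (|y| / 2) ^ 2 := by
    rw [← Real.cosh_abs, ← mul_div_cancel₀ |y| (two_ne_zero (α := ℝ)), Real.cosh_two_mul,
      Real.cosh_sq, mul_div_cancel_left₀ _ (two_ne_zero (α := ℝ))]
    ring
  have h2 : |y| / 2 ≤ Real.sinh (|y| / 2) := Real.self_le_sinh_iff.2 (by positivity)
  have h3 : (|y| / 2) ^ 2 ≤ Real.sinh (|y| / 2) ^ 2 := by gcongr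
  rw [div_pow, sq_abs] at h3
  linarith

/-- `|x|^{-2d}` is subharmonic away from the origin. -/
theorem le_avg_nsq_inv_pow (hd : 3 ≤ d) {x : Lat d} (hx : 2 * d ≤ nsq x) :
    (nsq x ^ d)⁻¹ ≤ avg (fun y => (nsq y ^ d)⁻¹) x := by
  set S := nsq x with hS
  have hd' : (3 : ℝ) ≤ d := by exact_mod_cast hd
  have hS0 : 0 < S := by linarith
  have hpow : ∀ s t : ℝ, 0 < s → s = S * (1 + t) → (S ^ d)⁻¹ * Real.exp (-(d * t)) ≤ (s ^ d)⁻¹ := by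
    intro s t hs hst
    have h1 : 0 ≤ 1 + t := by
      by_contra! h
      nlinarith
    rw [Real.exp_neg, ← mul_inv]
    refine inv_anti₀ (by positivity) ?_
    rw [hst, mul_pow, Real.exp_nat_mul]
    gcongr
    linarith [Real.add_one_le_exp t]
  have hterm : ∀ i, (S ^ d)⁻¹ * (2 * (1 - d / S) * (1 + 2 * d ^ 2 * (x i : ℝ) ^ 2 / S ^ 2)) ≤
      (nsq (x + Pi.single i 1) ^ d)⁻¹ + (nsq (x - Pi.single i 1) ^ d)⁻¹ := by
    intro i
    obtain ⟨h1, h2⟩ := div_four_le_nsq (by linarith : 4 ≤ S) (sq_le_nsq x i)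
    have e1 := hpow _ ((1 + 2 * x i) / S) (by linarith : 0 < S + 1 + 2 * x i)
      (by field_simp; ring)
    have e2 := hpow _ ((1 - 2 * x i) / S) (by linarith : 0 < S + 1 - 2 * x i)
      (by field_simp; ring)
    rw [nsq_add_single_one, nsq_sub_single_one]
    refine le_trans ?_ (add_le_add e1 e2)
    rw [← mul_add]
    refine mul_le_mul_of_nonneg_left ?_ (by positivity)
    have hc : Real.exp (-(d * ((1 + 2 * x i) / S))) + Real.exp (-(d * ((1 - 2 * x i) / S))) =
        2 * Real.exp (-(d / S)) * Real.cosh (2 * d * x i / S) := by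
      have g1 : Real.exp (-(d * ((1 + 2 * x i) / S))) =
          Real.exp (-(d / S)) * Real.exp (-(2 * d * x i / S)) := by
        rw [← Real.exp_add]
        congr 1
        ring
      have g2 : Real.exp (-(d * ((1 - 2 * x i) / S))) =
          Real.exp (-(d / S)) * Real.exp (2 * d * x i / S) := by
        rw [← Real.exp_add]
        congr 1
        ring
      rw [g1, g2, Real.cosh_eq]
      ring
    rw [hc]
    have h3 : 1 - d / S ≤ Real.exp (-(d / S)) := by linarith [Real.add_one_le_exp (-(d / S))]
    have h4 : 1 + 2 * d ^ 2 * (x i : ℝ) ^ 2 / S ^ 2 ≤ Real.cosh (2 * d * x i / S) := by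
      have := one_add_sq_div_two_le_cosh (2 * d * x i / S)
      refine le_trans (le_of_eq ?_) this
      ring
    have h5 : 0 ≤ 1 - d / S := by
      rw [sub_nonneg, div_le_one hS0]
      linarith
    gcongr
  unfold avg
  rw [le_div_iff₀ (by positivity)]
  refine le_trans ?_ (Finset.sum_le_sum fun i _ => hterm i)
  rw [← Finset.mul_sum, ← Finset.mul_sum, Finset.sum_add_distrib, ← Finset.sum_div,
    ← Finset.mul_sum, sum_sq_eq_nsq, ← hS]
  refine mul_le_mul_of_nonneg_left ?_ (by positivity)
  simp only [Finset.sum_const, Finset.card_univ, Fintype.card_fin, nsmul_eq_mul, mul_one]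
  have : 2 * (1 - d / S) * (d + 2 * d ^ 2 * S / S ^ 2) =
      2 * d + 2 * d ^ 2 * (S - 2 * d) / S ^ 2 := by
    field_simp
    ring
  rw [this]
  have h6 : 0 ≤ 2 * (d : ℝ) ^ 2 * (S - 2 * d) / S ^ 2 :=
    div_nonneg (mul_nonneg (by positivity) (by linarith)) (by positivity)
  linarith

theorem one_add_rpow_neg_quarter_le {t : ℝ} (ht : |t| ≤ 1 / 40) :
    (1 + t) ^ (-(1 / 4) : ℝ) ≤ 1 - t / 4 + 11 / 64 * t ^ 2 := by
  obtain ⟨h1, h2⟩ := abs_le.1 ht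
  have hp : 0 ≤ 1 - t / 4 + 11 / 64 * t ^ 2 := by nlinarith
  have h0 : 0 < 1 + t := by linarith
  rw [← pow_le_pow_iff_left₀ (Real.rpow_nonneg h0.le _) hp (by norm_num : 4 ≠ 0),
    ← Real.rpow_natCast, ← Real.rpow_mul h0.le]
  norm_num
  rw [Real.rpow_neg_one, inv_le_iff_one_le_mul₀ h0]
  have horner : ∀ a q : ℝ, |q| ≤ 1 → |a| ≤ 39 / 40 → |a + t * q| ≤ 1 := by
    intro a q hq ha
    have h3 : |t * q| ≤ 1 / 40 * 1 := by
      rw [abs_mul]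
      gcongr
    linarith [abs_add_le a (t * q)]
  have hq := horner (31 / 64) _ (horner (-549 / 2048) _ (horner (863 / 4096) _
    (horner (-4455 / 65536) _ (horner (6897 / 262144) _ (horner (-70543 / 16777216)
      (14641 / 16777216) (by norm_num [abs_le]) (by norm_num [abs_le])) (by norm_num [abs_le]))
    (by norm_num [abs_le])) (by norm_num [abs_le])) (by norm_num [abs_le])) (by norm_num [abs_le])
  set q := (31 / 64 : ℝ) + _ with hq'
  have h3 : |t * q| ≤ 1 / 40 * 1 := by
    rw [abs_mul]
    gcongr
  have h4 : 0 ≤ t ^ 2 * (1 / 16 + t * q) :=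
    mul_nonneg (sq_nonneg t) (by linarith [(abs_le.1 h3).1])
  rw [hq'] at h4
  linarith

/-- The superharmonic function `(|x|² + 2000)^{-1/4}`. -/
def decay (x : Lat d) : ℝ := (nsq x + 2000) ^ (-(1 / 4) : ℝ)

theorem decay_pos (x : Lat d) : 0 < decay x :=
  Real.rpow_pos_of_pos (by linarith [nsq_nonneg x]) _

theorem avg_decay_le (hd : 3 ≤ d) (x : Lat d) : avg decay x ≤ decay x := by
  have hd' : (3 : ℝ) ≤ d := by exact_mod_cast hd
  have hS0 := nsq_nonneg x
  set S := nsq x with hS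
  set T := S + 2000 with hT
  have hT0 : 0 < T := by linarith
  have hpow : ∀ s a : ℝ, s + 2000 = T + a → |a| ≤ T / 40 →
      (s + 2000) ^ (-(1 / 4) : ℝ) ≤
        T ^ (-(1 / 4) : ℝ) * (1 - a / T / 4 + 11 / 64 * (a / T) ^ 2) := by
    intro s a hs ha
    have h1 : |a / T| ≤ 1 / 40 := by
      rw [abs_div, abs_of_pos hT0, div_le_iff₀ hT0]
      linarith
    have h2 : T + a = T * (1 + a / T) := by field_simp
    rw [hs, h2, Real.mul_rpow hT0.le (by linarith [(abs_le.1 h1).1])]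
    gcongr
    exact one_add_rpow_neg_quarter_le h1
  have hterm : ∀ i, decay (x + Pi.single i 1) + decay (x - Pi.single i 1) ≤
      T ^ (-(1 / 4) : ℝ) * (2 - 1 / (2 * T) + 11 / 32 * (1 + 4 * (x i : ℝ) ^ 2) / T ^ 2) := by
    intro i
    have hi := sq_le_nsq x i
    have hb : |2 * (x i : ℝ)| ≤ T / 40 - 1 := by
      refine abs_le_of_sq_le_sq' ?_ (by linarith) |> abs_le.2
      nlinarith [sq_nonneg (S - 1000)]
    have e1 := hpow (nsq (x + Pi.single i 1)) (1 + 2 * x i)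
      (by rw [nsq_add_single_one]; ring) (by rw [abs_le] at hb ⊢; constructor <;> linarith)
    have e2 := hpow (nsq (x - Pi.single i 1)) (1 - 2 * x i)
      (by rw [nsq_sub_single_one]; ring) (by rw [abs_le] at hb ⊢; constructor <;> linarith)
    refine (add_le_add e1 e2).trans (le_of_eq ?_)
    rw [← mul_add]
    congr 1
    field_simp
    ring
  unfold avg
  rw [div_le_iff₀ (by positivity)]
  refine (Finset.sum_le_sum fun i _ => hterm i).trans ?_
  rw [← Finset.mul_sum, Finset.sum_add_distrib, ← Finset.sum_div,
    ← Finset.mul_sum, Finset.sum_add_distrib, ← Finset.mul_sum, sum_sq_eq_nsq, ← hS]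
  refine mul_le_mul_of_nonneg_left ?_ (by positivity)
  simp only [Finset.sum_const, Finset.card_univ, Fintype.card_fin, nsmul_eq_mul, mul_one]
  have : d * (2 - 1 / (2 * T)) + 11 / 32 * (d + 4 * S) / T ^ 2 =
      2 * d - (d * T / 2 - 11 / 32 * (d + 4 * S)) / T ^ 2 := by
    field_simp
    ring
  rw [this]
  have h6 : 0 ≤ (d * T / 2 - 11 / 32 * (d + 4 * S)) / T ^ 2 :=
    div_nonneg (by nlinarith) (by positivity)
  linarith

end Barrier

/-! ### The Harnack inequality -/

section Harnack

variable {d : ℕ}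

theorem mem_cube_iff_norm_le {x : Lat d} {L : ℕ} : x ∈ cube d L ↔ ‖x‖ ≤ L := by
  rw [pi_norm_le_iff_of_nonneg (Nat.cast_nonneg L)]
  refine forall_congr' fun i => ?_
  rw [Int.norm_eq_abs]
  exact_mod_cast Iff.rfl

theorem natAbs_add_sum_erase (y : Lat d) (i : Fin d) (t : ℤ) :
    ∑ j, ((y + Pi.single i t : Lat d) j).natAbs + (y i).natAbs =
      ∑ j, (y j).natAbs + (y i + t).natAbs := by
  rw [← Finset.add_sum_erase _ _ (Finset.mem_univ i),
    ← Finset.add_sum_erase Finset.univ (fun j => (y j).natAbs) (Finset.mem_univ i)]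
  have : ∑ j ∈ Finset.univ.erase i, ((y + Pi.single i t : Lat d) j).natAbs =
      ∑ j ∈ Finset.univ.erase i, (y j).natAbs :=
    Finset.sum_congr rfl fun j hj => by simp [Finset.ne_of_mem_erase hj]
  rw [this]
  simp
  ring

/-- A nonnegative superharmonic function loses at most a factor `2d` per step. -/
theorem le_pow_mul_of_sum_natAbs_le (hd : 0 < d) {w : Lat d → ℝ} (hw : ∀ x, 0 ≤ w x) {n : ℕ} :
    ∀ y : Lat d, (∀ z ∈ cube d n, avg w z ≤ w z) → ∑ i, (y i).natAbs ≤ n →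
      w 0 ≤ (2 * d) ^ n * w y := by
  have hd' : (1 : ℝ) ≤ d := by exact_mod_cast hd
  induction n with
  | zero =>
    intro y _ hy
    have : y = 0 := by
      ext i
      have := (Finset.sum_eq_zero_iff.1 (Nat.le_zero.1 hy)) i (Finset.mem_univ i)
      simpa using this
    simp [this]
  | succ n ih =>
    intro y hs hy
    by_cases h0 : y = 0
    · subst h0
      exact le_mul_of_one_le_left (hw 0) (one_le_pow₀ (by linarith))
    obtain ⟨i, hi⟩ : ∃ i, y i ≠ 0 := by
      by_contra! h
      exact h0 (funext h)
    have hyc : y ∈ cube d (n + 1) := fun j => by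
      have := Finset.single_le_sum (f := fun i => (y i).natAbs) (fun _ _ => Nat.zero_le _)
        (Finset.mem_univ j)
      beta_reduce at this
      rw [Int.abs_eq_natAbs]
      exact_mod_cast this.trans hy
    have hs' : ∀ z ∈ cube d n, avg w z ≤ w z := fun z hz => hs z (cube_mono n.le_succ hz)
    have step : ∀ z, ∑ j, (z j).natAbs ≤ n → w z / (2 * d) ≤ w y →
        w 0 ≤ (2 * d) ^ (n + 1) * w y := by
      intro z hz hzy
      rw [div_le_iff₀ (by positivity)] at hzy
      calc w 0 ≤ (2 * d) ^ n * w z := ih z hs' hz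
        _ ≤ (2 * d) ^ n * (w y * (2 * d)) := by gcongr
        _ = _ := by ring
    rcases lt_or_gt_of_ne hi with hi | hi
    · refine step (y + Pi.single i 1) ?_ ((le_avg_add hw y i).trans (hs y hyc))
      have := natAbs_add_sum_erase y i 1
      omega
    · refine step (y - Pi.single i 1) ?_ ((le_avg_sub hw y i).trans (hs y hyc))
      have := natAbs_add_sum_erase y i (-1)
      rw [Pi.single_neg, ← sub_eq_add_neg] at this
      omega

theorem sum_natAbs_le_of_nsq_le {y : Lat d} {n : ℕ} (h : nsq y ≤ n) : ∑ i, (y i).natAbs ≤ n := by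
  have : ((∑ i, (y i).natAbs : ℕ) : ℝ) ≤ nsq y := by
    push_cast
    refine Finset.sum_le_sum fun i _ => ?_
    have h1 : ((y i).natAbs : ℝ) = |(y i : ℝ)| := by
      rw [Nat.cast_natAbs, Int.cast_abs]
    have h2 : ((y i).natAbs : ℝ) ≤ ((y i).natAbs : ℝ) ^ 2 := by
      exact_mod_cast Nat.le_self_pow two_ne_zero _
    rwa [h1, sq_abs, ← h1] at h2
  exact_mod_cast this.trans h

theorem mem_cube_of_nsq_le {y : Lat d} {n : ℕ} (h : nsq y ≤ (n : ℝ) ^ 2) :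
    y ∈ cube d n := fun i => by
  have := abs_le_of_sq_le_sq ((sq_le_nsq y i).trans h) (Nat.cast_nonneg n)
  exact_mod_cast this

/-- Lower bound for a nonnegative superharmonic function that is bounded below on a ball. -/
theorem le_of_ball_lower_bound (hd : 3 ≤ d) {w : Lat d → ℝ} (hw : ∀ x, 0 ≤ w x) {S Q m : ℝ}
    (hm : 0 ≤ m) (hS : 2 * d ≤ S) (hsup : ∀ y, nsq y ≤ Q → avg w y ≤ w y)
    (hball : ∀ y, nsq y ≤ S → m ≤ w y) {x : Lat d} (hx : nsq x ≤ Q / 2) (hx0 : S ≤ nsq x) :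
    m * (S / (4 * nsq x)) ^ d / 2 ≤ w x := by
  have hd' : (3 : ℝ) ≤ d := by exact_mod_cast hd
  have hS0 : 0 < S := by linarith
  have hX0 : 0 < nsq x := by linarith
  have hQ0 : 0 < Q := by linarith
  obtain hxS | hxS := eq_or_lt_of_le hx0
  · refine le_trans ?_ (hball x hxS.ge)
    rw [← hxS]
    have : (S / (4 * S)) ^ d ≤ 1 := pow_le_one₀ (by positivity) (by field_simp; norm_num)
    nlinarith
  set D : Set (Lat d) := {y | S < nsq y ∧ nsq y ≤ Q} with hD
  have hDfin : D.Finite := by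
    refine (finite_cube ⌈Real.sqrt Q⌉₊).subset fun y hy => mem_cube_of_nsq_le (hy.2.trans ?_)
    rw [← Real.sqrt_le_left (by positivity)]
    exact Nat.le_ceil _
  have key := le_of_le_avg (by omega) hDfin (w := w)
    (v := fun y => m * (S / 4) ^ d * ((nsq y ^ d)⁻¹ - (Q ^ d)⁻¹)) ?_ (fun y hy => hsup y hy.2) ?_
    x ⟨hxS, by linarith⟩
  · refine le_trans ?_ key
    have h1 : (Q ^ d)⁻¹ ≤ (nsq x ^ d)⁻¹ / 2 := by
      have h2 : 2 * nsq x ^ d ≤ Q ^ d := by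
        calc 2 * nsq x ^ d ≤ 2 ^ d * nsq x ^ d := by
              gcongr
              exact le_self_pow₀ (by norm_num) (by omega)
          _ = (2 * nsq x) ^ d := (mul_pow _ _ _).symm
          _ ≤ Q ^ d := by
              gcongr
              linarith
      calc (Q ^ d)⁻¹ ≤ (2 * nsq x ^ d)⁻¹ := inv_anti₀ (by positivity) h2
        _ = _ := by rw [mul_inv]; ring
    calc m * (S / (4 * nsq x)) ^ d / 2 = m * (S / 4) ^ d * ((nsq x ^ d)⁻¹ / 2) := by
          rw [← div_div, div_pow _ (nsq x)]
          ring
      _ ≤ _ := by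
          gcongr
          linarith
  · intro y hy
    rw [avg_const_mul, avg_sub, avg_const (by omega)]
    gcongr
    exact le_avg_nsq_inv_pow hd (by linarith [hy.1])
  · have hout : ∀ z, z ∉ D → S / 4 ≤ nsq z →
        m * (S / 4) ^ d * ((nsq z ^ d)⁻¹ - (Q ^ d)⁻¹) ≤ w z := by
      intro z hz hz4
      by_cases hzS : nsq z ≤ S
      · refine le_trans ?_ (hball z hzS)
        have h1 : (nsq z ^ d)⁻¹ - (Q ^ d)⁻¹ ≤ ((S / 4) ^ d)⁻¹ :=
          (sub_le_self _ (by positivity)).trans (inv_anti₀ (by positivity) (by gcongr))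
        calc _ ≤ m * (S / 4) ^ d * ((S / 4) ^ d)⁻¹ := by gcongr
          _ = m := by field_simp
      · have hzQ : Q < nsq z := by
          by_contra! h
          exact hz ⟨not_le.1 hzS, h⟩
        refine le_trans (mul_nonpos_of_nonneg_of_nonpos (by positivity) ?_) (hw z)
        rw [sub_nonpos]
        gcongr
    intro y hy i
    obtain ⟨h1, h2⟩ := div_four_le_nsq (by linarith [hy.1] : 4 ≤ nsq y) (sq_le_nsq y i)
    refine ⟨fun h => hout _ h ?_, fun h => hout _ h ?_⟩
    · rw [nsq_add_single_one]
      linarith [hy.1]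
    · rw [nsq_sub_single_one]
      linarith [hy.1]

/-- The constant in the radius of the ball on which a harmonic function stays comparable to its
value at the centre. -/
def harnackScale (d : ℕ) : ℕ := 4 * (8 * d ^ 2 * 4 ^ d) + 2

theorem le_of_nsq_le_max (hd : 3 ≤ d) {w : Lat d → ℝ} (hw0 : ∀ y, 0 ≤ w y) {s : ℝ} (hs : 1 ≤ s)
    {r : ℝ} (hsr : s + 2 * d ≤ r) (hharm : ∀ y, ‖y‖ ≤ r → avg w y = w y)
    (hle : 2 ≤ s → ∀ y, ‖y‖ ≤ s / 2 → w y ≤ 4 ^ d * w 0) {y : Lat d}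
    (hy : nsq y ≤ max (2 * (d : ℝ)) ((⌊s / harnackScale d⌋₊ : ℝ) ^ 2)) :
    ((2 * (d : ℝ)) ^ (2 * d))⁻¹ * w 0 ≤ w y := by
  have hd' : (3 : ℝ) ≤ d := by exact_mod_cast hd
  set K₀ : ℕ := 8 * d ^ 2 * 4 ^ d with hK₀
  have hK₀pos : 0 < K₀ := by positivity
  have hK : (harnackScale d : ℝ) = 4 * K₀ + 2 := by
    rw [harnackScale, ← hK₀]
    push_cast
    ring
  rw [hK] at hy
  set ρ : ℕ := ⌊s / (4 * K₀ + 2)⌋₊ with hρ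
  have hρs : ρ * (4 * K₀ + 2 : ℝ) ≤ s := by
    rw [← le_div_iff₀ (by positivity)]
    exact Nat.floor_le (by positivity)
  obtain hy | hy := le_max_iff.1 hy
  · have h := le_pow_mul_of_sum_natAbs_le (by omega) hw0 (n := 2 * d) y
      (fun z hz => (hharm z ?_).le)
      (sum_natAbs_le_of_nsq_le (by exact_mod_cast hy))
    · rw [inv_mul_le_iff₀ (by positivity)]
      exact h
    · have := mem_cube_iff_norm_le.1 hz
      push_cast at this
      linarith
  have hyc := mem_cube_of_nsq_le hy
  by_cases hρ0 : ρ = 0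
  · have hy0 : y = 0 := by
      ext i
      have := hyc i
      simpa [hρ0] using this
    rw [hy0]
    exact mul_le_of_le_one_left (hw0 0) (inv_le_one_of_one_le₀ (one_le_pow₀ (by linarith)))
  have hρ1 : (1 : ℝ) ≤ ρ := by exact_mod_cast Nat.one_le_iff_ne_zero.2 hρ0
  have hLs : 2 * (K₀ * ρ : ℝ) + 1 ≤ s / 2 := by linarith
  have hs2 : 2 ≤ s := by
    have : (0 : ℝ) ≤ K₀ * ρ := by positivity
    linarith
  have h := abs_sub_zero_le (by omega) (L := K₀ * ρ) (Nat.le_mul_of_pos_left _ hK₀pos)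
    (w := w) (M := 4 ^ d * w 0) (fun z hz => hharm z ?_) (fun z _ => hw0 z)
    (fun z hz => hle hs2 z ?_) hyc
  · have h6 : 4 * (d : ℝ) ^ 2 * (4 ^ d * w 0) * ρ / ((K₀ * ρ : ℕ) + 1) ≤ w 0 / 2 := by
      rw [div_le_iff₀ (by positivity), hK₀]
      push_cast
      linarith [hw0 0]
    have h8 := (abs_le.1 (h.trans h6)).1
    have h9 : ((2 * d : ℝ) ^ (2 * d))⁻¹ ≤ 1 / 2 := by
      rw [one_div]
      refine inv_anti₀ (by norm_num) ?_
      exact le_trans (by linarith) (le_self_pow₀ (by linarith : (1 : ℝ) ≤ 2 * d) (by omega))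
    have := mul_le_mul_of_nonneg_right h9 (hw0 0)
    linarith
  · have := mem_cube_iff_norm_le.1 hz
    push_cast at this
    linarith
  · have := mem_cube_iff_norm_le.1 hz
    push_cast at this
    linarith

/-- **Harnack inequality** on cubes of `ℤ^d`. -/
theorem exists_harnack (hd : 3 ≤ d) : ∃ C : ℝ, 0 < C ∧ ∀ R : ℕ, 1 ≤ R → ∀ U : Lat d → ℝ,
    (∀ x, 0 ≤ U x) → (∀ x ∈ cube d (5 * d * R), avg U x = U x) →
      ∀ y ∈ cube d R, U y ≤ C * U 0 := by
  have hd' : (3 : ℝ) ≤ d := by exact_mod_cast hd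
  set K : ℕ := harnackScale d with hK
  have hK1 : 1 ≤ K := by
    rw [hK, harnackScale]
    omega
  set c : ℝ := ((2 * d) ^ (2 * d))⁻¹ with hc
  have hcpos : 0 < c := by positivity
  refine ⟨2 / c * (64 * d * K ^ 2) ^ d, by positivity, fun R hR U hU0 hU y hy => ?_⟩
  have hR' : (1 : ℝ) ≤ R := by exact_mod_cast hR
  obtain ⟨x, hx, hmax⟩ := Set.exists_max_image (cube d (2 * R))
    (fun x => U x * (2 * R + 1 - ‖x‖) ^ (2 * d)) (finite_cube _) ⟨0, zero_mem_cube _⟩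
  have hxn : ‖x‖ ≤ 2 * R := by exact_mod_cast mem_cube_iff_norm_le.1 hx
  set s : ℝ := 2 * R + 1 - ‖x‖ with hs
  have hs1 : 1 ≤ s := by linarith
  have hsR : s ≤ 3 * R := by linarith [norm_nonneg x]
  set ρ : ℕ := ⌊s / K⌋₊ with hρ
  have hKpos : (0 : ℝ) < K := by positivity
  have hρs : ρ * (K : ℝ) ≤ s := by
    rw [← le_div_iff₀ hKpos]
    exact Nat.floor_le (by positivity)
  have hsρ : s < (ρ + 1) * K := by
    rw [← div_lt_iff₀ hKpos]
    exact Nat.lt_floor_add_one _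
  set w : Lat d → ℝ := fun y => U (y + x) with hw
  have hw0 : ∀ y, 0 ≤ w y := fun y => hU0 _
  have hnorm : ∀ y n, y ∈ cube d n → ‖y + x‖ ≤ n + 2 * R := fun y n hy =>
    (norm_add_le _ _).trans (add_le_add (mem_cube_iff_norm_le.1 hy) hxn)
  have hharm : ∀ y, ‖y + x‖ ≤ 5 * d * R → avg w y = w y := by
    intro y hy
    rw [hw, avg_comp_translate]
    exact hU _ (mem_cube_iff_norm_le.2 (by exact_mod_cast hy))
  set S : ℝ := max (2 * d) ((ρ : ℝ) ^ 2) with hS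
  have hball : ∀ y, nsq y ≤ S → c * U x ≤ w y := by
    intro y hy
    have hwx : w 0 = U x := by simp [hw]
    rw [← hwx]
    refine le_of_nsq_le_max hd hw0 hs1 (r := s + 2 * d) le_rfl (fun z hz => hharm z ?_) ?_ hy
    · have := norm_add_le z x
      nlinarith
    · intro hs2 z hz
      have h1 := norm_add_le z x
      have h2 : s / 2 ≤ 2 * R + 1 - ‖z + x‖ := by linarith
      have h3 := hmax (z + x) (mem_cube_iff_norm_le.2 (by push_cast; linarith))
      have h4 : U (z + x) * (s / 2) ^ (2 * d) ≤ U x * s ^ (2 * d) := by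
        refine le_trans ?_ h3
        have := hU0 (z + x)
        gcongr
      rw [div_pow, mul_div_assoc', div_le_iff₀ (by positivity), pow_mul 2 2 d] at h4
      norm_num at h4
      rw [hwx]
      refine le_of_mul_le_mul_right (h4.trans (le_of_eq ?_)) (by positivity : 0 < s ^ (2 * d))
      ring
  have hSs : s ^ 2 / (4 * K ^ 2) ≤ S := by
    rw [div_le_iff₀ (by positivity)]
    have h1 : s ^ 2 ≤ ((ρ + 1) * K) ^ 2 := by gcongr
    have h2 : ((ρ : ℝ) + 1) ^ 2 ≤ 4 * S := by
      have := le_max_left (2 * (d : ℝ)) ((ρ : ℝ) ^ 2)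
      have := le_max_right (2 * (d : ℝ)) ((ρ : ℝ) ^ 2)
      nlinarith [sq_nonneg ((ρ : ℝ) - 1)]
    calc s ^ 2 ≤ ((ρ : ℝ) + 1) ^ 2 * K ^ 2 := by rw [← mul_pow]; exact h1
      _ ≤ 4 * S * K ^ 2 := by gcongr
      _ = _ := by ring
  have hx2 : nsq (-x) ≤ 4 * d * R ^ 2 := by
    have : -x ∈ cube d (2 * R) := mem_cube_iff_norm_le.2 (by rw [norm_neg]; push_cast; exact hxn)
    refine (nsq_le_of_mem_cube this).trans (le_of_eq ?_)
    push_cast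
    ring
  have hlow : c * U x * (s ^ 2 / (64 * d * K ^ 2 * R ^ 2)) ^ d / 2 ≤ U 0 := by
    have hwx : w (-x) = U 0 := by simp [hw]
    have hcU : 0 ≤ c * U x := mul_nonneg hcpos.le (hU0 x)
    rcases le_total (nsq (-x)) S with h | h
    · rw [← hwx]
      refine le_trans ?_ (hball _ h)
      have : (s ^ 2 / (64 * d * K ^ 2 * R ^ 2)) ^ d ≤ 1 := by
        refine pow_le_one₀ (by positivity) ?_
        rw [div_le_one (by positivity)]
        have h1 : s ^ 2 ≤ (3 * R) ^ 2 := by gcongr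
        have h2 : (1 : ℝ) ≤ d * K ^ 2 := by
          have : (1 : ℝ) ≤ K := by exact_mod_cast hK1
          nlinarith
        nlinarith [sq_nonneg (R : ℝ)]
      nlinarith
    · rw [← hwx]
      have hbig := le_of_ball_lower_bound hd hw0 (S := S) (Q := 8 * d * R ^ 2) hcU (le_max_left _ _)
        (fun y hy => (hharm y ?_).le) hball (x := -x) (by linarith) h
      · refine le_trans ?_ hbig
        have hS0 : 0 < S := lt_of_lt_of_le (by linarith) (le_max_left _ _)
        have hn0 : 0 < nsq (-x) := hS0.trans_le h
        gcongr c * U x * ?_ ^ d / 2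
        calc s ^ 2 / (64 * d * K ^ 2 * R ^ 2) = s ^ 2 / (4 * K ^ 2) / (4 * (4 * d * R ^ 2)) := by
              field_simp
              norm_num
          _ ≤ S / (4 * nsq (-x)) := by gcongr
      · have hyc : y ∈ cube d (3 * d * R) :=
        mem_cube_of_nsq_le (hy.trans (by push_cast; nlinarith [sq_nonneg (R : ℝ)]))
        have := hnorm y _ hyc
        push_cast at this
        nlinarith
  have hyn := mem_cube_iff_norm_le.1 hy
  have hfin := hmax y (cube_mono (by omega) hy)
  have h1 : U y * R ^ (2 * d) ≤ U x * s ^ (2 * d) := by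
    refine le_trans ?_ hfin
    have := hU0 y
    gcongr
    linarith
  rw [div_pow, mul_pow _ ((R : ℝ) ^ 2)] at hlow
  rw [pow_mul, pow_mul] at h1
  set P : ℝ := (64 * d * K ^ 2) ^ d
  have hP : 0 < P := by positivity
  have hRp : 0 < ((R : ℝ) ^ 2) ^ d := by positivity
  have h2 : c * (U x * (s ^ 2) ^ d) ≤ 2 * U 0 * (P * ((R : ℝ) ^ 2) ^ d) := by
    have : c * U x * ((s ^ 2) ^ d / (P * ((R : ℝ) ^ 2) ^ d)) / 2 =
      c * (U x * (s ^ 2) ^ d) / (2 * (P * ((R : ℝ) ^ 2) ^ d)) := by field_simp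
    rw [this, div_le_iff₀ (by positivity)] at hlow
    linarith
  have h3 : c * U y ≤ 2 * U 0 * P := by
    refine le_of_mul_le_mul_right ?_ hRp
    nlinarith
  rw [div_mul_eq_mul_div, div_mul_eq_mul_div, le_div_iff₀ hcpos]
  linarith

end Harnack

/-! ### Monotone limits of averaging iterates -/

section Limits

variable {d : ℕ} {R : Type*} [AddGroupWithOne R]

theorem tendsto_avg {ι : Type*} {l : Filter ι} {F : ι → (Fin d → R) → ℝ} {G : (Fin d → R) → ℝ}
    (h : ∀ x, Tendsto (fun n => F n x) l (nhds (G x))) (x : Fin d → R) :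
    Tendsto (fun n => avg (F n) x) l (nhds (avg G x)) := by
  unfold avg
  exact (tendsto_finsetSum _ fun i _ => (h _).add (h _)).div_const _

/-- Iterates of averaging on `S`, with the values of `u` frozen off `S`. -/
def avgIter (S : Set (Fin d → R)) (u : (Fin d → R) → ℝ) : ℕ → (Fin d → R) → ℝ
  | 0, x => u x
  | n + 1, x => if x ∈ S then avg (avgIter S u n) x else u x

theorem avgIter_le {S : Set (Fin d → R)} {u w : (Fin d → R) → ℝ} (huw : ∀ x, u x ≤ w x)
    (hw : ∀ x ∈ S, avg w x ≤ w x) (n : ℕ) : ∀ x, avgIter S u n x ≤ w x := by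
  induction n with
  | zero => exact huw
  | succ n ih =>
    intro x
    rw [avgIter]
    split_ifs with hx
    · exact (avg_mono fun i => ⟨ih _, ih _⟩).trans (hw x hx)
    · exact huw x

theorem avgIter_le_succ {S : Set (Fin d → R)} {u : (Fin d → R) → ℝ}
    (hu : ∀ x ∈ S, u x ≤ avg u x) (n : ℕ) : ∀ x, avgIter S u n x ≤ avgIter S u (n + 1) x := by
  induction n with
  | zero =>
    intro x
    rw [avgIter, avgIter]
    split_ifs with hx
    · exact hu x hx
    · exact le_rfl
  | succ n ih =>
    intro x
    rw [avgIter, avgIter]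
    split_ifs with hx
    · exact avg_mono fun i => ⟨ih _, ih _⟩
    · exact le_rfl

/-- A bounded function that is subharmonic on `S` has a harmonic majorant on `S` that agrees with it
off `S`. -/
theorem exists_tendsto_avgIter (hd : 0 < d) {S : Set (Fin d → R)} {u : (Fin d → R) → ℝ} {M : ℝ}
    (hM : ∀ x, u x ≤ M) (hu : ∀ x ∈ S, u x ≤ avg u x) :
    ∃ U : (Fin d → R) → ℝ, (∀ x, Tendsto (fun n => avgIter S u n x) atTop (nhds (U x))) ∧
      (∀ x ∈ S, avg U x = U x) ∧ (∀ x, x ∉ S → U x = u x) ∧ (∀ x, u x ≤ U x) := by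
  have hmono : ∀ x, Monotone fun n => avgIter S u n x :=
    fun x => monotone_nat_of_le_succ fun n => avgIter_le_succ hu n x
  have hbdd : ∀ x, BddAbove (Set.range fun n => avgIter S u n x) := fun x =>
    ⟨M, Set.forall_mem_range.2 fun n =>
      avgIter_le (w := fun _ => M) hM (fun x _ => (avg_const hd M x).le) n x⟩
  have hlim : ∀ x, Tendsto (fun n => avgIter S u n x) atTop (nhds (⨆ n, avgIter S u n x)) :=
    fun x => tendsto_atTop_ciSup (hmono x) (hbdd x)
  refine ⟨_, hlim, fun x hx => ?_, fun x hx => ?_, fun x => le_ciSup (hbdd x) 0⟩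
  · refine tendsto_nhds_unique (tendsto_avg hlim x) ?_
    refine ((tendsto_add_atTop_iff_nat 1).2 (hlim x)).congr fun n => ?_
    rw [avgIter, if_pos hx]
  · refine tendsto_nhds_unique (hlim x) (tendsto_const_nhds.congr fun n => ?_)
    cases n <;> simp [avgIter, hx]

/-- The probability that the walk started at `x` avoids `V` up to time `m`. -/
def avoid (V : Set (Fin d → R)) : ℕ → (Fin d → R) → ℝ
  | 0, x => if x ∈ V then 0 else 1
  | m + 1, x => if x ∈ V then 0 else avg (avoid V m) x

theorem avoid_eq_one_sub (hd : 0 < d) (V : Set (Fin d → R)) (m : ℕ) :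
    avoid V m = fun x => 1 - avgIter Vᶜ (fun y => if y ∈ V then 1 else 0) m x := by
  induction m with
  | zero =>
    ext x
    rw [avoid, avgIter]
    by_cases hx : x ∈ V <;> simp [hx]
  | succ m ih =>
    ext x
    rw [avoid, avgIter, ih]
    by_cases hx : x ∈ V
    · simp [hx]
    · rw [if_neg hx, if_pos (by simpa using hx), avg_sub, avg_const hd]

end Limits

/-! ### The escape probability from a cube -/

section Escape

variable {d : ℕ}

/-- The minimum of `decay` on a cube, up to a constant factor. -/
def decayMin (d r : ℕ) : ℝ := (d * (r : ℝ) ^ 2 + 2000) ^ (-(1 / 4) : ℝ)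

theorem decayMin_pos (d r : ℕ) : 0 < decayMin d r := Real.rpow_pos_of_pos (by positivity) _

theorem decayMin_le {r : ℕ} {x : Lat d} (hx : x ∈ cube d r) : decayMin d r ≤ decay x :=
  Real.rpow_le_rpow_of_nonpos (by linarith [nsq_nonneg x])
    (by linarith [nsq_le_of_mem_cube hx]) (by norm_num)

theorem succ_sq_le_nsq_of_lt_abs {n : ℕ} {x : Lat d} {i : Fin d} (h : (n : ℤ) < |x i|) :
    ((n : ℝ) + 1) ^ 2 ≤ nsq x := by
  refine le_trans ?_ (sq_le_nsq x i)
  rw [← sq_abs (x i : ℝ)]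
  gcongr
  exact_mod_cast h

theorem decay_le_of_notMem {ρ : ℕ} {x : Lat d} (hx : x ∉ cube d ρ) :
    decay x ≤ (((ρ : ℝ) + 1) ^ 2) ^ (-(1 / 4) : ℝ) := by
  obtain ⟨i, hi⟩ : ∃ i, (ρ : ℤ) < |x i| := by
    by_contra! h
    exact hx h
  exact Real.rpow_le_rpow_of_nonpos (by positivity) (by linarith [succ_sq_le_nsq_of_lt_abs hi])
    (by norm_num)

/-- `E` is the probability of never hitting the cube of radius `r`. -/
structure IsEscape (r : ℕ) (E : Lat d → ℝ) : Prop where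
  tendsto : ∀ x, Tendsto (fun n => avoid (cube d r) n x) atTop (nhds (E x))
  avg_eq : ∀ x, x ∉ cube d r → avg E x = E x
  eq_zero : ∀ x ∈ cube d r, E x = 0
  le_one : ∀ x, E x ≤ 1
  nonneg : ∀ x, 0 ≤ E x
  one_sub_le : ∀ x, 1 - decay x / decayMin d r ≤ E x

theorem exists_isEscape (hd : 3 ≤ d) (r : ℕ) : ∃ E : Lat d → ℝ, IsEscape r E := by
  have hd0 : 0 < d := by omega
  set u : Lat d → ℝ := fun y => if y ∈ cube d r then 1 else 0 with hu
  have hu0 : ∀ x, 0 ≤ u x := fun x => by simp only [hu]; split_ifs <;> norm_num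
  have hu1 : ∀ x, u x ≤ 1 := fun x => by simp only [hu]; split_ifs <;> norm_num
  obtain ⟨H, hlim, hharm, hout, hle⟩ := exists_tendsto_avgIter hd0 (S := (cube d r)ᶜ) hu1
    fun x hx => by
      have : u x = 0 := if_neg hx
      exact this ▸ avg_nonneg hu0 x
  refine ⟨fun x => 1 - H x, ?_, ?_, ?_, ?_, ?_, ?_⟩
  · intro x
    simp only [avoid_eq_one_sub hd0]
    exact (hlim x).const_sub 1
  · intro x hx
    rw [avg_sub, avg_const hd0, hharm x hx]
  · intro x hx
    rw [hout x (fun h => h hx), hu]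
    simp [hx]
  · intro x
    linarith [hle x, hu0 x]
  · intro x
    rw [sub_nonneg]
    exact le_of_tendsto' (hlim x) fun n =>
      avgIter_le (w := fun _ => 1) hu1 (fun x _ => (avg_const hd0 1 x).le) n x
  · intro x
    have hm := decayMin_pos d r
    suffices h : H x ≤ (decayMin d r)⁻¹ * decay x by
      rw [div_eq_inv_mul]
      linarith
    refine le_of_tendsto' (hlim x) fun n =>
      avgIter_le (w := fun x => (decayMin d r)⁻¹ * decay x) (fun y => ?_) (fun y _ => ?_) n x
    · by_cases hy : y ∈ cube d r
      · rw [hu]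
        simp only [hy, if_true]
        rw [← div_eq_inv_mul, one_le_div hm]
        exact decayMin_le hy
      · rw [hu]
        simp only [hy, if_false]
        exact mul_nonneg (inv_nonneg.2 hm.le) (decay_pos y).le
    · rw [avg_const_mul]
      exact mul_le_mul_of_nonneg_left (avg_decay_le hd y) (inv_nonneg.2 hm.le)

theorem IsEscape.pos {r : ℕ} {E : Lat d → ℝ} (hE : IsEscape r E) (hd : 3 ≤ d) {x : Lat d}
    (hx : x ∉ cube d r) : 0 < E x := by
  have hd0 : 0 < d := by omega
  obtain ⟨i, hi⟩ : ∃ i, (r : ℤ) < |x i| := by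
    by_contra! h
    exact hx h
  have key : ∀ k n : ℕ, k + n = d * r → ∀ y : Lat d, ((r + n : ℕ) : ℤ) < |y i| → 0 < E y := by
    intro k
    induction k with
    | zero =>
      intro n hn y hy
      have h1 := succ_sq_le_nsq_of_lt_abs hy
      refine lt_of_lt_of_le ?_ (hE.one_sub_le y)
      rw [sub_pos, div_lt_one (decayMin_pos d r)]
      refine Real.rpow_lt_rpow_of_neg (by positivity) ?_ (by norm_num)
      have : (d : ℝ) * r ^ 2 < ((r + n : ℕ) + 1 : ℝ) ^ 2 := by
        have h2 : d * r ^ 2 < (r + n + 1) ^ 2 := by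
          rw [zero_add] at hn
          rw [hn]
          nlinarith [Nat.zero_le (d * r * r)]
        exact_mod_cast h2
      linarith
    | succ k ih =>
      intro n hn y hy
      have hyc : y ∉ cube d r := fun h => by
        have := h i
        push_cast at hy
        omega
      rw [← hE.avg_eq y hyc]
      have hpos : ∀ z, ((r + (n + 1) : ℕ) : ℤ) < |z i| → 0 < E z / (2 * d) := fun z hz =>
        div_pos (ih (n + 1) (by omega) z hz) (by positivity)
      rcases le_total 0 (y i) with h0 | h0
      · refine (hpos (y + Pi.single i 1) ?_).trans_le (le_avg_add hE.nonneg y i)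
        rw [abs_of_nonneg h0] at hy
        simp only [Pi.add_apply, Pi.single_eq_same]
        rw [abs_of_nonneg (by omega)]
        push_cast at hy ⊢
        omega
      · refine (hpos (y - Pi.single i 1) ?_).trans_le (le_avg_sub hE.nonneg y i)
        rw [abs_of_nonpos h0] at hy
        simp only [Pi.sub_apply, Pi.single_eq_same]
        rw [abs_of_nonpos (by omega)]
        push_cast at hy ⊢
        omega
  exact key (d * r) 0 (by omega) x (by simpa using hi)

theorem sdiff_neighbour_cases {r ρ : ℕ} {y : Lat d}
    (hy : y ∈ cube d (ρ + 1)) (h : y ∉ cube d ρ \ cube d r) :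
    y ∈ cube d r ∨ y ∈ cube d (ρ + 1) \ cube d ρ := by
  by_cases h1 : y ∈ cube d r
  · exact Or.inl h1
  · exact Or.inr ⟨hy, fun h2 => h ⟨h2, h1⟩⟩

/-- The ratio governing the decay of hitting probabilities between two cubes. -/
def decayRatio (d r ρ : ℕ) : ℝ := (((ρ : ℝ) + 1) ^ 2) ^ (-(1 / 4) : ℝ) / decayMin d r

theorem decayRatio_nonneg (d r ρ : ℕ) : 0 ≤ decayRatio d r ρ :=
  div_nonneg (Real.rpow_nonneg (by positivity) _) (decayMin_pos d r).le

theorem decay_div_le_decayRatio {r ρ : ℕ} {x : Lat d} (hx : x ∉ cube d ρ) :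
    decay x / decayMin d r ≤ decayRatio d r ρ :=
  div_le_div_of_nonneg_right (decay_le_of_notMem hx) (decayMin_pos d r).le

/-- Near a cube on which it vanishes, a nonnegative harmonic function is close to a multiple of
the escape probability. -/
theorem exists_local_comparison (hd : 3 ≤ d) : ∃ C : ℝ, 2 ≤ C ∧ ∀ r ρ L : ℕ, r ≤ ρ → ρ + 1 ≤ L →
    ∀ u : Lat d → ℝ, (∀ x, 0 ≤ u x) → (∃ M, ∀ x, u x ≤ M) → (∀ x ∈ cube d r, u x = 0) →
    (∀ x ∈ cube d (5 * d * (2 * L + 1)), x ∉ cube d r → avg u x = u x) →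
    ∀ E : Lat d → ℝ, IsEscape r E → C * (decayRatio d r ρ + (ρ + 1) / (L + 1)) ≤ 1 / 2 →
    ∃ a : ℝ, 0 ≤ a ∧ ∀ x ∈ cube d r,
      a * (1 - C * (decayRatio d r ρ + (ρ + 1) / (L + 1))) * avg E x ≤ avg u x ∧
      avg u x ≤ a * (1 + C * (decayRatio d r ρ + (ρ + 1) / (L + 1))) * avg E x := by
  have hd0 : 0 < d := by omega
  obtain ⟨C₀, hC₀, harnack⟩ := exists_harnack hd
  refine ⟨8 * d ^ 2 * C₀ + C₀ + 2, by nlinarith [sq_nonneg (d : ℝ)], ?_⟩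
  intro r ρ L hr hρ u hu0 ⟨M, hM⟩ hur huh E hE hsmall
  set Λ := 5 * d * (2 * L + 1) with hΛ
  have hLΛ : 2 * L + 1 ≤ Λ := Nat.le_mul_of_pos_left _ (by omega)
  obtain ⟨U, -, hharm, hout, hle⟩ := exists_tendsto_avgIter hd0 (S := cube d Λ) hM fun x hx => by
    by_cases hxr : x ∈ cube d r
    · exact hur x hxr ▸ avg_nonneg hu0 x
    · exact (huh x hx hxr).ge
  have hU0 : ∀ x, 0 ≤ U x := fun x => (hu0 x).trans (hle x)
  have hH : ∀ y ∈ cube d (2 * L + 1), U y ≤ C₀ * U 0 := harnack _ (by omega) U hU0 hharm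
  set a := U 0 with ha
  have ha0 : 0 ≤ a := hU0 0
  set δ := decayRatio d r ρ with hδ
  have hδ0 : 0 ≤ δ := decayRatio_nonneg d r ρ
  set t : ℝ := (ρ + 1) / (L + 1) with ht
  have ht0 : 0 ≤ t := by positivity
  have hgrad : ∀ y ∈ cube d (ρ + 1), |U y - a| ≤ 4 * d ^ 2 * C₀ * a * t := by
    intro y hy
    have := abs_sub_zero_le hd0 hρ (w := U) (M := C₀ * a)
      (fun x hx => hharm x (cube_mono (by omega) hx)) (fun x _ => hU0 x) hH hy
    refine this.trans (le_of_eq ?_)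
    rw [ht]
    push_cast
    ring
  have hm := decayMin_pos d r
  have hD : ∀ x ∈ cube d Λ \ cube d r, U x - u x ≤ C₀ * a / decayMin d r * decay x := by
    have hpos : 0 ≤ C₀ * a / decayMin d r := by positivity
    refine le_of_le_avg hd0 ((finite_cube Λ).subset Set.sdiff_subset)
      (v := fun x => U x - u x) (fun x hx => ?_) (fun x _ => ?_) (fun x hx i => ?_)
    · rw [avg_sub, hharm x hx.1, huh x hx.1 hx.2]
    · rw [avg_const_mul]
      exact mul_le_mul_of_nonneg_left (avg_decay_le hd x) hpos
    · have hbd : ∀ y ∈ cube d (Λ + 1), y ∉ cube d Λ \ cube d r →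
          U y - u y ≤ C₀ * a / decayMin d r * decay y := by
        intro y hy hyD
        rcases sdiff_neighbour_cases hy hyD with h | h
        · rw [hur y h, sub_zero, div_mul_eq_mul_div, le_div_iff₀ hm]
          have h1 := hH y (cube_mono (by omega) h)
          have h2 := decayMin_le h
          have : 0 ≤ C₀ * a := by positivity
          gcongr
        · rw [hout y h.2, sub_self]
          exact mul_nonneg hpos (decay_pos y).le
      exact ⟨hbd _ (add_single_mem_cube hx.1 i), hbd _ (sub_single_mem_cube hx.1 i)⟩
  have hshell : ∀ y ∈ cube d (ρ + 1) \ cube d ρ,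
      a * (1 - 4 * d ^ 2 * C₀ * t - C₀ * δ) ≤ u y ∧ u y ≤ a * (1 + 4 * d ^ 2 * C₀ * t) := by
    intro y hy
    have h1 := abs_le.1 (hgrad y hy.1)
    have h2 := hD y ⟨cube_mono (by omega) hy.1, fun h => hy.2 (cube_mono hr h)⟩
    have h3 : C₀ * a / decayMin d r * decay y ≤ C₀ * a * δ := by
      rw [div_mul_eq_mul_div, mul_div_assoc]
      exact mul_le_mul_of_nonneg_left (decay_div_le_decayRatio hy.2) (by positivity)
    constructor
    · linarith [h1.1]
    · linarith [h1.2, hle y]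
  set C := 8 * (d : ℝ) ^ 2 * C₀ + C₀ + 2 with hC
  have hdC : 0 ≤ (d : ℝ) ^ 2 * C₀ := by positivity
  have p1 := mul_nonneg hdC ht0
  have p2 := mul_nonneg hdC hδ0
  have p3 := mul_nonneg hC₀.le ht0
  have p4 := mul_nonneg hC₀.le hδ0
  have hδ1 : δ ≤ 1 / 4 := by
    rw [hC] at hsmall
    linarith
  have hlow1 : 1 - C * (δ + t) ≤ 1 - 4 * d ^ 2 * C₀ * t - C₀ * δ := by
    rw [hC]
    linarith
  have hupp : 1 + 4 * d ^ 2 * C₀ * t ≤ (1 + C * (δ + t)) * (1 - δ) := by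
    have h1 : C * (δ + t) * δ ≤ 1 / 2 * δ := by gcongr
    have h2 : (1 + C * (δ + t)) * (1 - δ) = 1 + C * (δ + t) - δ - C * (δ + t) * δ := by ring
    rw [h2]
    have h3 : 4 * d ^ 2 * C₀ * t + 2 * δ ≤ C * (δ + t) := by
      rw [hC]
      linarith
    linarith
  have hEδ : ∀ y, y ∉ cube d ρ → 1 - δ ≤ E y := fun y hy => by
    linarith [hE.one_sub_le y, decay_div_le_decayRatio (r := r) hy]
  have hcmp : ∀ y ∈ cube d (ρ + 1), a * (1 - C * (δ + t)) * E y ≤ u y ∧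
      u y ≤ a * (1 + C * (δ + t)) * E y := by
    have hbase : ∀ y ∈ cube d (ρ + 1), y ∉ cube d ρ \ cube d r →
        a * (1 - C * (δ + t)) * E y ≤ u y ∧ u y ≤ a * (1 + C * (δ + t)) * E y := by
      intro y hy hyD
      by_cases h : y ∈ cube d r
      · simp [hur y h, hE.eq_zero y h]
      · have hyρ : y ∉ cube d ρ := fun h' => hyD ⟨h', h⟩
        obtain ⟨h1, h2⟩ := hshell y ⟨hy, hyρ⟩
        have h5 : 0 ≤ a * (1 - C * (δ + t)) := mul_nonneg ha0 (by linarith)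
        have h6 : 0 ≤ a * (1 + C * (δ + t)) := mul_nonneg ha0 (by linarith)
        constructor
        · refine le_trans (mul_le_of_le_one_right h5 (hE.le_one y)) (le_trans ?_ h1)
          gcongr
        · calc u y ≤ a * (1 + 4 * d ^ 2 * C₀ * t) := h2
            _ ≤ a * ((1 + C * (δ + t)) * (1 - δ)) := by gcongr
            _ = a * (1 + C * (δ + t)) * (1 - δ) := by ring
            _ ≤ _ := mul_le_mul_of_nonneg_left (hEδ y hyρ) h6
    have hfin : (cube d ρ \ cube d r).Finite := (finite_cube ρ).subset Set.sdiff_subset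
    have hEh : ∀ b : ℝ, ∀ x ∈ cube d ρ \ cube d r, avg (fun y => b * E y) x = b * E x :=
      fun b x hx => by rw [avg_const_mul, hE.avg_eq x hx.2]
    have huh' : ∀ x ∈ cube d ρ \ cube d r, avg u x = u x := fun x hx =>
      huh x (cube_mono (by omega) hx.1) hx.2
    have hl := le_of_le_avg hd0 hfin (v := fun y => a * (1 - C * (δ + t)) * E y) (w := u)
      (fun x hx => (hEh _ x hx).ge) (fun x hx => (huh' x hx).le) fun x hx i =>
        ⟨fun h => (hbase _ (add_single_mem_cube hx.1 i) h).1,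
          fun h => (hbase _ (sub_single_mem_cube hx.1 i) h).1⟩
    have hu := le_of_le_avg hd0 hfin (v := u) (w := fun y => a * (1 + C * (δ + t)) * E y)
      (fun x hx => (huh' x hx).ge) (fun x hx => (hEh _ x hx).le) fun x hx i =>
        ⟨fun h => (hbase _ (add_single_mem_cube hx.1 i) h).2,
          fun h => (hbase _ (sub_single_mem_cube hx.1 i) h).2⟩
    intro y hy
    by_cases h : y ∈ cube d ρ \ cube d r
    · exact ⟨hl y h, hu y h⟩
    · exact hbase y hy h
  refine ⟨a, ha0, fun x hx => ?_⟩
  have hx' : x ∈ cube d ρ := cube_mono hr hx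
  rw [← avg_const_mul, ← avg_const_mul]
  exact ⟨avg_mono fun i => ⟨(hcmp _ (add_single_mem_cube hx' i)).1,
      (hcmp _ (sub_single_mem_cube hx' i)).1⟩,
    avg_mono fun i => ⟨(hcmp _ (add_single_mem_cube hx' i)).2,
      (hcmp _ (sub_single_mem_cube hx' i)).2⟩⟩

end Escape

/-! ### The killed Green function on the torus -/

section Torus

variable {d N : ℕ}

theorem sum_avg_mul [NeZero N] (v w : Torus d N → ℝ) :
    ∑ x, avg v x * w x = ∑ x, v x * avg w x := by
  have h1 : ∀ i : Fin d, ∑ x : Torus d N, v (x + Pi.single i 1) * w x =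
      ∑ x : Torus d N, v x * w (x - Pi.single i 1) := fun i => by
    refine Eq.trans ?_ (Equiv.sum_comp (Equiv.addRight (Pi.single i 1 : Torus d N))
      (fun x => v x * w (x - Pi.single i 1)))
    simp
  have h2 : ∀ i : Fin d, ∑ x : Torus d N, v (x - Pi.single i 1) * w x =
      ∑ x : Torus d N, v x * w (x + Pi.single i 1) := fun i => by
    refine (Equiv.sum_comp (Equiv.addRight (Pi.single i 1 : Torus d N))
      (fun x => v (x - Pi.single i 1) * w x)).symm.trans ?_
    simp
  simp only [avg, div_mul_eq_mul_div, mul_div_assoc', ← Finset.sum_div, Finset.sum_mul,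
    Finset.mul_sum, add_mul, mul_add]
  congr 1
  rw [Finset.sum_comm, Finset.sum_comm (s := Finset.univ (α := Torus d N))]
  refine Finset.sum_congr rfl fun i _ => ?_
  rw [Finset.sum_add_distrib, Finset.sum_add_distrib, h1, h2, add_comm]

theorem sum_avg [NeZero N] (hd : 0 < d) (v : Torus d N → ℝ) : ∑ x, avg v x = ∑ x, v x := by
  have := sum_avg_mul v (fun _ => 1)
  simpa [avg_const hd] using this

/-- A strictly superharmonic function on the torus away from the origin. -/
theorem exists_strict_superharmonic (hd : 0 < d) (hN : 2 ≤ N) : ∃ (g : Torus d N → ℝ) (c : ℝ),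
    0 < c ∧ (∀ x, 0 ≤ g x) ∧ (∀ x, g x ≤ 1) ∧ ∀ x, x ≠ 0 → avg g x ≤ g x - c := by
  have : NeZero N := ⟨by omega⟩
  have : Fact (1 < N) := ⟨by omega⟩
  have hd' : (1 : ℝ) ≤ d := by exact_mod_cast hd
  set q : ℝ := 1 / (4 * d) with hq
  have hq0 : 0 < q := by positivity
  have hq1 : q ≤ 1 := by
    rw [hq, div_le_one (by positivity)]
    linarith
  set D : Torus d N → ℕ := fun x => ∑ i, (x i).val with hD
  have hDle : ∀ x, D x ≤ d * N := fun x => by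
    refine (Finset.sum_le_card_nsmul _ _ N fun i _ => (ZMod.val_lt _).le).trans ?_
    simp
  refine ⟨fun x => 1 - q ^ D x, q ^ (d * N), by positivity, fun x => ?_, fun x => ?_,
    fun x hx => ?_⟩
  · rw [sub_nonneg]
    exact pow_le_one₀ hq0.le hq1
  · have : 0 ≤ q ^ D x := by positivity
    linarith
  · obtain ⟨i, hi⟩ : ∃ i, x i ≠ 0 := by
      by_contra! h
      exact hx (funext h)
    have hi1 : 1 ≤ (x i).val := by
      have := (ZMod.val_ne_zero (x i)).2 hi
      omega
    have hstep : D (x - Pi.single i 1) + 1 = D x := by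
      simp only [hD]
      rw [← Finset.add_sum_erase _ _ (Finset.mem_univ i),
        ← Finset.add_sum_erase Finset.univ (fun j => (x j).val) (Finset.mem_univ i)]
      have h1 : ∑ j ∈ Finset.univ.erase i, ((x - Pi.single i 1 : Torus d N) j).val =
          ∑ j ∈ Finset.univ.erase i, (x j).val :=
        Finset.sum_congr rfl fun j hj => by simp [Finset.ne_of_mem_erase hj]
      have h2 : ((x - Pi.single i 1 : Torus d N) i).val = (x i).val - 1 := by
        rw [Pi.sub_apply, Pi.single_eq_same, ZMod.val_sub (by rwa [ZMod.val_one]), ZMod.val_one]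
      rw [h1, h2]
      omega
    have h3 := le_avg_sub (w := fun x => q ^ D x) (fun x => by positivity) x i
    have h4 : 2 * q ^ D x = q ^ D (x - Pi.single i 1) / (2 * d) := by
      rw [← hstep, pow_succ, hq]
      field_simp
      norm_num
    have h5 : q ^ (d * N) ≤ q ^ D x := pow_le_pow_of_le_one hq0.le hq1 (hDle x)
    rw [avg_sub, avg_const hd]
    linarith

/-- The mass at `x` at time `n` of the walk with initial distribution `σ` killed on `A`. -/
def killedMass (A : Set (Torus d N)) (σ : Torus d N → ℝ) : ℕ → Torus d N → ℝ
  | 0, x => σ x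
  | n + 1, x => if x ∈ A then 0 else avg (killedMass A σ n) x

theorem killedMass_nonneg {A : Set (Torus d N)} {σ : Torus d N → ℝ} (hσ : ∀ x, 0 ≤ σ x) (n : ℕ) :
    ∀ x, 0 ≤ killedMass A σ n x := by
  induction n with
  | zero => exact hσ
  | succ n ih =>
    intro x
    rw [killedMass]
    split_ifs
    · exact le_rfl
    · exact avg_nonneg ih x

theorem killedMass_eq_zero {A : Set (Torus d N)} {σ : Torus d N → ℝ} (hσA : ∀ x ∈ A, σ x = 0)
    (n : ℕ) {x : Torus d N} (hx : x ∈ A) : killedMass A σ n x = 0 := by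
  cases n with
  | zero => exact hσA x hx
  | succ n => rw [killedMass, if_pos hx]

theorem summable_killedMass (hd : 0 < d) (hN : 2 ≤ N) {A : Set (Torus d N)} (h0 : 0 ∈ A)
    {σ : Torus d N → ℝ} (hσ : ∀ x, 0 ≤ σ x) (hσA : ∀ x ∈ A, σ x = 0) (x : Torus d N) :
    Summable fun n => killedMass A σ n x := by
  have : NeZero N := ⟨by omega⟩
  obtain ⟨g, c, hc, hg0, -, hg⟩ := exists_strict_superharmonic hd hN
  set κ := killedMass A σ with hκ
  have hκ0 : ∀ n x, 0 ≤ κ n x := killedMass_nonneg hσ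
  have hstep : ∀ n, c * ∑ x, κ n x ≤ ∑ x, κ n x * g x - ∑ x, κ (n + 1) x * g x := by
    intro n
    have h1 : ∑ x, κ (n + 1) x * g x ≤ ∑ x, avg (κ n) x * g x := by
      refine Finset.sum_le_sum fun x _ => mul_le_mul_of_nonneg_right ?_ (hg0 x)
      rw [hκ, killedMass]
      split_ifs
      · exact avg_nonneg (hκ0 n) x
      · exact le_rfl
    have h2 : ∑ x, κ n x * avg g x ≤ ∑ x, (κ n x * g x - c * κ n x) := by
      refine Finset.sum_le_sum fun x _ => ?_
      by_cases hx : x ∈ A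
      · simp [hκ, killedMass_eq_zero hσA n hx]
      · have := mul_le_mul_of_nonneg_left (hg x fun h => hx (h ▸ h0)) (hκ0 n x)
        linarith
    rw [sum_avg_mul] at h1
    rw [Finset.sum_sub_distrib, ← Finset.mul_sum] at h2
    linarith
  refine summable_of_sum_range_le (c := (∑ x, σ x * g x) / c) (fun n => hκ0 n x) fun n => ?_
  rw [le_div_iff₀ hc]
  have h3 : ∑ i ∈ Finset.range n, c * ∑ x, κ i x ≤ ∑ x, κ 0 x * g x - ∑ x, κ n x * g x := by
    rw [← Finset.sum_range_sub' (fun n => ∑ x, κ n x * g x)]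
    exact Finset.sum_le_sum fun i _ => hstep i
  have h4 : (∑ i ∈ Finset.range n, κ i x) * c ≤ ∑ i ∈ Finset.range n, c * ∑ x, κ i x := by
    rw [Finset.sum_mul]
    refine Finset.sum_le_sum fun i _ => ?_
    rw [mul_comm]
    exact mul_le_mul_of_nonneg_left
      (Finset.single_le_sum (fun y _ => hκ0 i y) (Finset.mem_univ x)) hc.le
  have h5 : 0 ≤ ∑ x, κ n x * g x := Finset.sum_nonneg fun x _ => mul_nonneg (hκ0 n x) (hg0 x)
  have h6 : ∑ x, κ 0 x * g x = ∑ x, σ x * g x := rfl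
  linarith

/-- The Green function of the walk with initial distribution `σ` killed on `A`. -/
def green (A : Set (Torus d N)) (σ : Torus d N → ℝ) (x : Torus d N) : ℝ :=
  ∑' n, killedMass A σ n x

theorem hasSum_avg_killedMass (hd : 0 < d) (hN : 2 ≤ N) {A : Set (Torus d N)} (h0 : 0 ∈ A)
    {σ : Torus d N → ℝ} (hσ : ∀ x, 0 ≤ σ x) (hσA : ∀ x ∈ A, σ x = 0) (x : Torus d N) :
    HasSum (fun n => avg (killedMass A σ n) x) (avg (green A σ) x) := by
  have h := fun x => (summable_killedMass hd hN h0 hσ hσA x).hasSum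
  unfold avg
  exact (hasSum_sum fun i _ => (h _).add (h _)).div_const _

theorem green_eq (hd : 0 < d) (hN : 2 ≤ N) {A : Set (Torus d N)} (h0 : 0 ∈ A)
    {σ : Torus d N → ℝ} (hσ : ∀ x, 0 ≤ σ x) (hσA : ∀ x ∈ A, σ x = 0) {x : Torus d N} (hx : x ∉ A) :
    green A σ x = σ x + avg (green A σ) x := by
  rw [green, (summable_killedMass hd hN h0 hσ hσA x).tsum_eq_zero_add]
  congr 1
  rw [← (hasSum_avg_killedMass hd hN h0 hσ hσA x).tsum_eq]
  exact tsum_congr fun n => by rw [killedMass, if_neg hx]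

theorem green_eq_zero {A : Set (Torus d N)} {σ : Torus d N → ℝ} (hσA : ∀ x ∈ A, σ x = 0)
    {x : Torus d N} (hx : x ∈ A) : green A σ x = 0 := by
  simp [green, killedMass_eq_zero hσA _ hx]

theorem sum_avg_green [NeZero N] (hd : 0 < d) (hN : 2 ≤ N) {A : Set (Torus d N)} (h0 : 0 ∈ A)
    {σ : Torus d N → ℝ} (hσ : ∀ x, 0 ≤ σ x) (hσA : ∀ x ∈ A, σ x = 0) :
    ∑ x with x ∈ A, avg (green A σ) x = ∑ x, σ x := by
  have h1 := sum_avg hd (green A σ)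
  have h2 : ∑ x, green A σ x = ∑ x, (σ x + if x ∈ A then 0 else avg (green A σ) x) := by
    refine Finset.sum_congr rfl fun x _ => ?_
    split_ifs with hx
    · rw [green_eq_zero hσA hx, hσA x hx, add_zero]
    · exact green_eq hd hN h0 hσ hσA hx
  rw [h2, Finset.sum_add_distrib] at h1
  have h3 : ∑ x, avg (green A σ) x = ∑ x with x ∈ A, avg (green A σ) x +
      ∑ x, (if x ∈ A then 0 else avg (green A σ) x) := by
    rw [Finset.sum_filter, ← Finset.sum_add_distrib]
    exact Finset.sum_congr rfl fun x _ => by split_ifs <;> simp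
  linarith

/-! ### Lifting from the torus to the lattice -/

/-- The covering map from the lattice to the torus. -/
def proj (N : ℕ) (y : Lat d) : Torus d N := fun i => (y i : ZMod N)

theorem proj_add_single (y : Lat d) (i : Fin d) :
    proj N (y + Pi.single i 1) = proj N y + Pi.single i 1 := by
  ext j
  by_cases h : j = i
  · subst h
    simp [proj]
  · simp [proj, h]

theorem proj_sub_single (y : Lat d) (i : Fin d) :
    proj N (y - Pi.single i 1) = proj N y - Pi.single i 1 := by
  ext j
  by_cases h : j = i
  · subst h
    simp [proj]
  · simp [proj, h]

theorem avg_comp_proj (u : Torus d N → ℝ) (y : Lat d) :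
    avg (fun z => u (proj N z)) y = avg u (proj N y) := by
  simp only [avg, proj_add_single, proj_sub_single]

theorem torusToLat_apply [NeZero N] (x : Torus d N) (i : Fin d) :
    torusToLat x i = (x i).valMinAbs := by
  rw [torusToLat, ZMod.valMinAbs_def_pos]
  have : ((x i).val : ℝ) ≤ (N : ℝ) / 2 ↔ (x i).val ≤ N / 2 := by
    rw [le_div_iff₀ two_pos, Nat.le_div_iff_mul_le two_pos]
    exact_mod_cast Iff.rfl
  simp only [this]

theorem proj_torusToLat [NeZero N] (x : Torus d N) : proj N (torusToLat x) = x := by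
  ext i
  rw [proj, torusToLat_apply, ZMod.coe_valMinAbs]

theorem torusToLat_proj [NeZero N] {L : ℕ} (hL : 2 * L < N) {y : Lat d} (hy : y ∈ cube d L) :
    torusToLat (proj N y) = y := by
  ext i
  rw [torusToLat_apply, ZMod.valMinAbs_spec]
  have := abs_le.1 (hy i)
  exact ⟨rfl, by omega, by omega⟩

theorem mem_torusBall_iff [NeZero N] {ρ : ℝ} (hρ : 0 ≤ ρ) (x : Torus d N) :
    x ∈ torusBall (0 : Torus d N) ρ ↔ torusToLat x ∈ cube d ⌊ρ⌋₊ := by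
  change (torusDist 0 x : ℝ) ≤ ρ ↔ ∀ i, |torusToLat x i| ≤ (⌊ρ⌋₊ : ℤ)
  rw [← Nat.le_floor_iff hρ, torusDist, Finset.sup_le_iff]
  refine ⟨fun h i => ?_, fun h i _ => ?_⟩
  all_goals
    have key : |torusToLat x i| =
        ((min ((0 : Torus d N) i - x i).val (x i - (0 : Torus d N) i).val : ℕ) : ℤ) := by
      rw [torusToLat_apply, Int.abs_eq_natAbs, ZMod.valMinAbs_natAbs_eq_min, Pi.zero_apply,
        zero_sub, sub_zero, ZMod.neg_val]
      split_ifs with h0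
      · simp [h0]
      · rw [min_comm]
  · rw [key]
    exact_mod_cast h i (Finset.mem_univ i)
  · have := h i
    rw [key] at this
    exact_mod_cast this

theorem proj_mem_torusBall_iff [NeZero N] {ρ : ℝ} (hρ : 0 ≤ ρ) {L : ℕ} (hL : 2 * L < N) {y : Lat d}
    (hy : y ∈ cube d L) : proj N y ∈ torusBall (0 : Torus d N) ρ ↔ y ∈ cube d ⌊ρ⌋₊ := by
  rw [mem_torusBall_iff hρ, torusToLat_proj hL hy]

theorem torusToLat_image_torusBall [NeZero N] {ρ : ℝ} (hρ : 0 ≤ ρ) (hN : 2 * ⌊ρ⌋₊ < N) :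
    torusToLat '' torusBall (0 : Torus d N) ρ = cube d ⌊ρ⌋₊ := by
  ext y
  refine ⟨?_, fun hy => ⟨proj N y, (proj_mem_torusBall_iff hρ hN hy).2 hy, torusToLat_proj hN hy⟩⟩
  rintro ⟨x, hx, rfl⟩
  exact (mem_torusBall_iff hρ x).1 hx

/-- Ratio form of two-sided comparability with the equilibrium measure. -/
theorem abs_mul_div_sub_one_le {ι : Type*} (s : Finset ι) {h e : ι → ℝ} {a ξ : ℝ} (ha : 0 ≤ a)
    (hξ0 : 0 ≤ ξ) (hξ : ξ ≤ 1 / 2) (hsum : ∑ x ∈ s, h x = 1)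
    (hl : ∀ x ∈ s, a * (1 - ξ) * e x ≤ h x) (hu : ∀ x ∈ s, h x ≤ a * (1 + ξ) * e x)
    {x : ι} (hx : x ∈ s) (hex : 0 < e x) : |h x * (∑ y ∈ s, e y) / e x - 1| ≤ 4 * ξ := by
  have h1 : a * (1 - ξ) * ∑ y ∈ s, e y ≤ 1 := by
    rw [Finset.mul_sum]
    exact (Finset.sum_le_sum hl).trans_eq hsum
  have h2 : 1 ≤ a * (1 + ξ) * ∑ y ∈ s, e y := by
    rw [Finset.mul_sum]
    exact hsum.ge.trans (Finset.sum_le_sum hu)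
  set K := ∑ y ∈ s, e y with hK
  have hK0 : 0 ≤ K := by
    by_contra! hneg
    have : a * (1 + ξ) * K ≤ 0 := mul_nonpos_of_nonneg_of_nonpos (by positivity) hneg.le
    linarith
  have haK : 0 ≤ a * K := mul_nonneg ha hK0
  have h3 : h x * K / e x ≤ a * (1 + ξ) * K := by
    rw [div_le_iff₀ hex]
    have := mul_le_mul_of_nonneg_right (hu x hx) hK0
    linarith
  have h4 : a * (1 - ξ) * K ≤ h x * K / e x := by
    rw [le_div_iff₀ hex]
    have := mul_le_mul_of_nonneg_right (hl x hx) hK0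
    linarith
  rw [abs_le]
  have h5 : a * K ≤ 2 := by nlinarith
  have h6 : 2 / 3 ≤ a * K := by nlinarith
  constructor
  · nlinarith
  · nlinarith

end Torus

/-! ### Cylinder probabilities of the discrete walk -/

section Walk

theorem measurableSet_forall_le {α : Type*} [MeasurableSpace α] [MeasurableSingletonClass α]
    [Countable α] (S : ℕ → Set α) (n : ℕ) : MeasurableSet {ω : ℕ → α | ∀ k ≤ n, ω k ∈ S k} := by
  have : {ω : ℕ → α | ∀ k ≤ n, ω k ∈ S k} = ⋂ k ≤ n, (fun ω => ω k) ⁻¹' S k := by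
    ext ω
    simp
  rw [this]
  exact .biInter (Set.to_countable _) fun k _ =>
    measurable_pi_apply k (Set.to_countable (S k)).measurableSet

theorem measurableSet_eval_eq {α : Type*} [MeasurableSpace α] [MeasurableSingletonClass α]
    (n : ℕ) (y : α) : MeasurableSet {ω : ℕ → α | ω n = y} :=
  (measurable_pi_apply n : Measurable fun ω : ℕ → α => ω n) (measurableSet_singleton y)

variable {d : ℕ} {R : Type*} [AddGroupWithOne R]

theorem adj_comm {x y : Fin d → R} : adj x y ↔ adj y x := by
  unfold adj
  refine and_congr ne_comm (exists_congr fun i => and_congr or_comm ?_)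
  exact forall₂_congr fun j _ => eq_comm

theorem srwStep_comm (x y : Fin d → R) : srwStep x y = srwStep y x := by
  simp only [srwStep, adj_comm]

theorem adj_iff (h1 : (1 : R) ≠ 0) {x y : Fin d → R} :
    adj x y ↔ ∃ i, y = x + Pi.single i 1 ∨ y = x - Pi.single i 1 := by
  constructor
  · rintro ⟨-, i, h | h, hj⟩
    · refine ⟨i, Or.inl (funext fun j => ?_)⟩
      by_cases hji : j = i
      · subst hji
        simpa using h
      · simp [hji, hj j hji]
    · refine ⟨i, Or.inr (funext fun j => ?_)⟩
      by_cases hji : j = i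
      · subst hji
        simp [h]
      · simp [hji, hj j hji]
  · rintro ⟨i, rfl | rfl⟩
    · refine ⟨fun h => h1 ?_, i, Or.inl (by simp), fun j hj => by simp [hj]⟩
      simpa using congrFun h i
    · refine ⟨fun h => h1 ?_, i, Or.inr (by simp), fun j hj => by simp [hj]⟩
      simpa using (congrFun h i).symm

theorem tsum_srwStep_mul (h1 : (1 : R) ≠ 0) (h2 : (1 : R) ≠ -1) (F : (Fin d → R) → ℝ≥0∞)
    (x : Fin d → R) : ∑' y, srwStep x y * F y =
      (∑ i, (F (x + Pi.single i 1) + F (x - Pi.single i 1))) * ((2 * d : ℕ) : ℝ≥0∞)⁻¹ := by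
  set φ : Fin d × Bool → (Fin d → R) :=
    fun p => x + Pi.single p.1 (if p.2 then 1 else -1) with hφ
  have hsgn : ∀ b : Bool, (if b then (1 : R) else -1) ≠ 0 := by
    intro b
    cases b <;> simpa using h1
  have hinj : Function.Injective φ := by
    rintro ⟨i, b⟩ ⟨j, b'⟩ h
    have h' := add_left_cancel h
    have hij : i = j := by
      by_contra hij
      have := congrFun h' i
      simp only [Pi.single_eq_same, Pi.single_eq_of_ne hij] at this
      exact hsgn b this
    subst hij
    have := Pi.single_injective i h'
    cases b <;> cases b' <;> simp_all
  have hneg : ∀ i, φ (i, false) = x - Pi.single i 1 := fun i => by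
    simp [hφ, Pi.single_neg, sub_eq_add_neg]
  have hpos : ∀ i, φ (i, true) = x + Pi.single i 1 := fun i => by simp [hφ]
  have hsupp : Function.support (fun y => srwStep x y * F y) ⊆ Set.range φ := by
    intro y hy
    have : adj x y := by
      by_contra h
      simp [srwStep, h] at hy
    obtain ⟨i, rfl | rfl⟩ := (adj_iff h1).1 this
    · exact ⟨(i, true), hpos i⟩
    · exact ⟨(i, false), hneg i⟩
  rw [← hinj.tsum_eq hsupp, tsum_fintype, Fintype.sum_prod_type, Finset.sum_mul]
  refine Finset.sum_congr rfl fun i _ => ?_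
  have ha : adj x (x + Pi.single i 1) := (adj_iff h1).2 ⟨i, Or.inl rfl⟩
  have hb : adj x (x - Pi.single i 1) := (adj_iff h1).2 ⟨i, Or.inr rfl⟩
  rw [Fintype.sum_bool, hpos, hneg, srwStep, srwStep, if_pos ha, if_pos hb]
  ring

theorem tsum_srwStep_mul_ofReal (hd : 0 < d) (h1 : (1 : R) ≠ 0) (h2 : (1 : R) ≠ -1)
    {w : (Fin d → R) → ℝ} (hw : ∀ x, 0 ≤ w x) (x : Fin d → R) :
    ∑' y, srwStep x y * ENNReal.ofReal (w y) = ENNReal.ofReal (avg w x) := by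
  rw [tsum_srwStep_mul h1 h2, avg, ENNReal.ofReal_div_of_pos (by positivity), div_eq_mul_inv,
    ENNReal.ofReal_sum_of_nonneg fun i _ => add_nonneg (hw _) (hw _)]
  congr 1
  · exact Finset.sum_congr rfl fun i _ => (ENNReal.ofReal_add (hw _) (hw _)).symm
  · rw [← ENNReal.ofReal_natCast]
    push_cast
    rfl

/-- The mass at `y` at time `n` of the walk that has to be in `S k` at each time `k`. -/
def pathMass (S : ℕ → Set (Fin d → R)) (init : (Fin d → R) → ℝ≥0∞) : ℕ → (Fin d → R) → ℝ≥0∞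
  | 0, y => if y ∈ S 0 then init y else 0
  | n + 1, y => if y ∈ S (n + 1) then ∑' z, pathMass S init n z * srwStep z y else 0

variable [MeasurableSpace R] [MeasurableSingletonClass R] [Countable R]

theorem IsWalkLaw.measure_path {μ : Measure (ℕ → Fin d → R)} {init : (Fin d → R) → ℝ≥0∞}
    (hμ : IsWalkLaw μ init) (S : ℕ → Set (Fin d → R)) (n : ℕ) : ∀ (m : ℕ) (w : ℕ → Fin d → R),
    μ {ω | (∀ k ≤ n, ω k ∈ S k) ∧ ∀ j ≤ m, ω (n + j) = w j} =
      pathMass S init n (w 0) * ∏ j ∈ Finset.range m, srwStep (w j) (w (j + 1)) := by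
  induction n with
  | zero =>
    intro m w
    rw [pathMass]
    split_ifs with h
    · rw [← hμ.2 m w]
      congr 1
      ext ω
      simp only [Set.mem_ofPred_eq, zero_add, nonpos_iff_eq_zero, forall_eq]
      exact ⟨fun h' => h'.2, fun h' => ⟨(h' 0 (Nat.zero_le _)).symm ▸ h, h'⟩⟩
    · rw [zero_mul]
      convert measure_empty (μ := μ)
      ext ω
      simp only [Set.mem_ofPred_eq, zero_add, nonpos_iff_eq_zero, forall_eq,
        Set.mem_empty_iff_false, iff_false]
      exact fun h' => h (h'.2 0 (Nat.zero_le _) ▸ h'.1)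
  | succ n ih =>
    intro m w
    rw [pathMass]
    split_ifs with h
    · set w' : (Fin d → R) → ℕ → Fin d → R := fun z j => Nat.casesOn j z w with hw'
      have hU : {ω : ℕ → Fin d → R | (∀ k ≤ n + 1, ω k ∈ S k) ∧ ∀ j ≤ m, ω (n + 1 + j) = w j} =
          ⋃ z, {ω | (∀ k ≤ n, ω k ∈ S k) ∧ ∀ j ≤ m + 1, ω (n + j) = w' z j} := by
        ext ω
        simp only [Set.mem_ofPred_eq, Set.mem_iUnion]
        constructor
        · rintro ⟨h3, h4⟩
          refine ⟨ω n, fun k hk => h3 k (by omega), fun j hj => ?_⟩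
          cases j with
          | zero => rfl
          | succ j =>
            rw [← add_assoc, add_right_comm]
            exact h4 j (by omega)
        · rintro ⟨z, h3, h4⟩
          have h5 : ∀ j ≤ m, ω (n + 1 + j) = w j := fun j hj => by
            have := h4 (j + 1) (by omega)
            rwa [← add_assoc, add_right_comm] at this
          refine ⟨fun k hk => ?_, h5⟩
          rcases Nat.le_succ_iff.1 hk with hk | rfl
          · exact h3 k hk
          · exact (h5 0 (Nat.zero_le _)).symm ▸ h
      rw [hU, measure_iUnion, ENNReal.tsum_mul_right.symm]
      · refine tsum_congr fun z => ?_
        rw [ih, Finset.prod_range_succ', mul_assoc]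
        exact congrArg _ (mul_comm _ _)
      · intro z z' hz
        refine Set.disjoint_left.2 fun ω h3 h4 => hz ?_
        exact (h3.2 0 (Nat.zero_le _)).symm.trans (h4.2 0 (Nat.zero_le _))
      · intro z
        refine (measurableSet_forall_le S n).inter ?_
        have : {ω : ℕ → Fin d → R | ∀ j ≤ m + 1, ω (n + j) = w' z j} =
            ⋂ j ≤ m + 1, {ω | ω (n + j) = w' z j} := by
          ext ω
          simp
        change MeasurableSet {ω : ℕ → Fin d → R | ∀ j ≤ m + 1, ω (n + j) = w' z j}
        rw [this]
        exact .biInter (Set.to_countable _) fun j _ => measurableSet_eval_eq _ _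
    · rw [zero_mul]
      convert measure_empty (μ := μ)
      ext ω
      simp only [Set.mem_ofPred_eq, Set.mem_empty_iff_false, iff_false]
      exact fun h' => h (h'.2 0 (Nat.zero_le _) ▸ h'.1 (n + 1) le_rfl)

theorem IsWalkLaw.measure_eval {μ : Measure (ℕ → Fin d → R)} {init : (Fin d → R) → ℝ≥0∞}
    (hμ : IsWalkLaw μ init) (S : ℕ → Set (Fin d → R)) (n : ℕ) (y : Fin d → R) :
    μ {ω | (∀ k ≤ n, ω k ∈ S k) ∧ ω n = y} = pathMass S init n y := by
  have := hμ.measure_path S n 0 fun _ => y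
  simpa using this

theorem IsWalkLaw.measure_forall {μ : Measure (ℕ → Fin d → R)} {init : (Fin d → R) → ℝ≥0∞}
    (hμ : IsWalkLaw μ init) (S : ℕ → Set (Fin d → R)) (n : ℕ) :
    μ {ω | ∀ k ≤ n, ω k ∈ S k} = ∑' y, pathMass S init n y := by
  have hU : {ω : ℕ → Fin d → R | ∀ k ≤ n, ω k ∈ S k} =
      ⋃ y, {ω | (∀ k ≤ n, ω k ∈ S k) ∧ ω n = y} := by
    ext ω
    simp
  rw [hU, measure_iUnion]
  · exact tsum_congr fun y => hμ.measure_eval S n y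
  · exact fun z z' hz => Set.disjoint_left.2 fun ω h3 h4 => hz (h3.2.symm.trans h4.2)
  · exact fun z => (measurableSet_forall_le S n).inter (measurableSet_eval_eq n z)

end Walk

/-! ### Escape probabilities of the lattice walk -/

section LatticeWalk

variable {d : ℕ}

theorem avoid_nonneg {R : Type*} [AddGroupWithOne R] (V : Set (Fin d → R)) (m : ℕ) :
    ∀ x, 0 ≤ avoid V m x := by
  induction m with
  | zero =>
    intro x
    rw [avoid]
    split_ifs <;> norm_num
  | succ m ih =>
    intro x
    rw [avoid]
    split_ifs
    · exact le_rfl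
    · exact avg_nonneg ih x

theorem tsum_pathMass_mul_avg_avoid (hd : 0 < d) {V : Set (Lat d)} {S : ℕ → Set (Lat d)}
    (hS : ∀ n, S (n + 1) = Vᶜ) (init : Lat d → ℝ≥0∞) (m : ℕ) :
    ∀ n, ∑' y, pathMass S init n y * ENNReal.ofReal (avg (avoid V m) y) =
      ∑' y, pathMass S init (n + 1 + m) y := by
  have hswap : ∀ n m, ∑' y, pathMass S init n y * ENNReal.ofReal (avg (avoid V m) y) =
      ∑' z, (∑' y, pathMass S init n y * srwStep y z) * ENNReal.ofReal (avoid V m z) := by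
    intro n m
    simp_rw [← tsum_srwStep_mul_ofReal hd one_ne_zero (by norm_num : (1 : ℤ) ≠ -1)
      (avoid_nonneg V m), ← ENNReal.tsum_mul_left, ← ENNReal.tsum_mul_right]
    rw [ENNReal.tsum_comm]
    simp_rw [mul_assoc]
  induction m with
  | zero =>
    intro n
    rw [hswap]
    refine tsum_congr fun z => ?_
    rw [add_zero, pathMass, avoid, hS]
    by_cases hz : z ∈ V <;> simp [hz]
  | succ m ih =>
    intro n
    rw [hswap, show n + 1 + (m + 1) = n + 1 + 1 + m by omega, ← ih]
    refine tsum_congr fun z => ?_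
    rw [pathMass, avoid, hS]
    by_cases hz : z ∈ V <;> simp [hz]

theorem IsWalkLaw.measure_escEvent_cube (hd : 0 < d) {μ : Measure (ℕ → Lat d)} {x : Lat d}
    (hμ : IsWalkLaw μ (pointInit x)) {r : ℕ} {E : Lat d → ℝ} (hE : IsEscape r E) :
    (μ (escEvent (cube d r))).toReal = avg E x := by
  set V := cube d r with hV
  set S : ℕ → Set (Lat d) := fun n => if n = 0 then Set.univ else Vᶜ with hS
  set T : ℕ → Set (ℕ → Lat d) := fun m => {ω | ∀ k ≤ m + 1, ω k ∈ S k} with hT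
  have hTm : ∀ m, μ (T m) = ENNReal.ofReal (avg (avoid V m) x) := by
    intro m
    rw [hT, hμ.measure_forall S (m + 1), add_comm m 1]
    have := tsum_pathMass_mul_avg_avoid hd (V := V) (S := S) (fun n => by simp [hS])
      (pointInit x) m 0
    rw [zero_add] at this
    rw [← this, tsum_eq_single x]
    · simp [pathMass, hS, pointInit]
    · intro y hy
      simp [pathMass, pointInit, hy]
  have hesc : escEvent V = ⋂ m, T m := by
    ext ω
    simp only [escEvent, hT, Set.mem_ofPred_eq, Set.mem_iInter]
    constructor
    · intro h m k _
      by_cases hk : k = 0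
      · simp [hS, hk]
      · simpa [hS, hk] using h k (by omega)
    · intro h n hn
      have := h n n (by omega)
      simpa [hS, show n ≠ 0 by omega] using this
  have := hμ.1
  have hlim : Tendsto (fun m => μ (T m)) atTop (nhds (μ (escEvent V))) := by
    rw [hesc]
    refine tendsto_measure_iInter_atTop
      (fun m => (measurableSet_forall_le S (m + 1)).nullMeasurableSet)
      (fun m m' h ω hω k hk => hω k (by omega)) ⟨0, measure_ne_top _ _⟩
  have h2 := (ENNReal.tendsto_toReal (measure_ne_top μ (escEvent V))).comp hlim
  refine tendsto_nhds_unique h2 ((tendsto_avg hE.tendsto x).congr fun m => ?_)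
  rw [Function.comp_apply, hTm, ENNReal.toReal_ofReal (avg_nonneg (avoid_nonneg V m) x)]

theorem IsCap.eq_sum (hd : 0 < d) {r : ℕ} {c : ℝ} (hc : IsCap d (cube d r) c) {E : Lat d → ℝ}
    (hE : IsEscape r E) : c = ∑ x ∈ (finite_cube (d := d) r).toFinset, avg E x := by
  obtain ⟨μ, hμ, rfl⟩ := hc
  rw [← finsum_mem_eq_finite_toFinset_sum _ (finite_cube r)]
  exact finsum_mem_congr rfl fun x _ => (hμ x).measure_escEvent_cube hd hE

end LatticeWalk

/-! ### The entrance law of the torus walk -/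

section Entrance

variable {d N : ℕ}

/-- Discrete paths whose first visit to `A` is at `x`. -/
def entranceEvent (A : Set (Torus d N)) (x : Torus d N) : Set (ℕ → Torus d N) :=
  {ω | ∃ n, (∀ k < n, ω k ∉ A) ∧ ω n = x}

instance (n : ℕ) : MeasurableSingletonClass (ZMod n) := ⟨fun _ => trivial⟩

theorem one_ne_neg_one_zmod (hN : 3 ≤ N) : (1 : ZMod N) ≠ -1 := by
  intro h
  have h2 : ((2 : ℕ) : ZMod N) = 0 := by
    push_cast
    rw [← one_add_one_eq_two]
    nth_rewrite 2 [h]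
    exact add_neg_cancel 1
  have := Nat.le_of_dvd two_pos ((ZMod.natCast_eq_zero_iff 2 N).1 h2)
  omega

theorem IsWalkLaw.measure_entranceEvent (hd : 0 < d) (hN : 3 ≤ N) {A : Set (Torus d N)}
    (h0 : 0 ∈ A) {σ : Torus d N → ℝ} (hσ : ∀ x, 0 ≤ σ x) (hσA : ∀ x ∈ A, σ x = 0)
    {μ : Measure (ℕ → Torus d N)} (hμ : IsWalkLaw μ fun z => ENNReal.ofReal (σ z))
    {x : Torus d N} (hx : x ∈ A) :
    μ (entranceEvent A x) = ENNReal.ofReal (avg (green A σ) x) := by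
  have : NeZero N := ⟨by omega⟩
  have : Fact (1 < N) := ⟨by omega⟩
  set F : ℕ → Set (ℕ → Torus d N) := fun n => {ω | (∀ k < n, ω k ∉ A) ∧ ω n = x} with hF
  have hpath : ∀ (n : ℕ) (S : ℕ → Set (Torus d N)), (∀ k ≤ n, S k = Aᶜ) → ∀ k ≤ n, ∀ y,
      pathMass S (fun z => ENNReal.ofReal (σ z)) k y = ENNReal.ofReal (killedMass A σ k y) := by
    intro n S hS k
    induction k with
    | zero =>
      intro hk y
      rw [pathMass, hS 0 hk, killedMass]
      by_cases hy : y ∈ A <;> simp [hy, hσA]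
    | succ k ih =>
      intro hk y
      rw [pathMass, hS _ hk, killedMass]
      by_cases hy : y ∈ A
      · simp [hy]
      · rw [if_pos (by exact hy), if_neg hy, ← tsum_srwStep_mul_ofReal hd one_ne_zero
          (one_ne_neg_one_zmod hN) (killedMass_nonneg hσ k)]
        exact tsum_congr fun z => by rw [ih (by omega), mul_comm, srwStep_comm]
  have hF0 : μ (F 0) = 0 := by
    have := hμ.2 0 fun _ => x
    simpa [hF, hσA x hx] using this
  have hFs : ∀ n, μ (F (n + 1)) = ENNReal.ofReal (avg (killedMass A σ n) x) := by
    intro n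
    set S : ℕ → Set (Torus d N) := fun k => if k ≤ n then Aᶜ else Set.univ with hS
    have h := hμ.measure_eval S (n + 1) x
    rw [pathMass, if_pos (by simp [hS])] at h
    rw [← tsum_srwStep_mul_ofReal hd one_ne_zero (one_ne_neg_one_zmod hN) (killedMass_nonneg hσ n)]
    refine Eq.trans ?_ (h.trans (tsum_congr fun z => by
      rw [hpath n S (fun k hk => if_pos hk) n le_rfl z, mul_comm, srwStep_comm]))
    congr 1
    ext ω
    simp only [hF, Set.mem_ofPred_eq, hS]
    refine and_congr_left fun _ => ⟨fun h' k hk => ?_, fun h' k hk => ?_⟩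
    · split_ifs with hkn
      · exact h' k (by omega)
      · trivial
    · have := h' k (by omega)
      rwa [if_pos (by omega)] at this
  have hU : entranceEvent A x = ⋃ n, F n := by
    ext ω
    simp [entranceEvent, hF]
  have hsum := hasSum_avg_killedMass hd (by omega) h0 hσ hσA x
  rw [hU, measure_iUnion, tsum_eq_zero_add' ENNReal.summable, hF0, zero_add, tsum_congr hFs,
    ← ENNReal.ofReal_tsum_of_nonneg (fun n => avg_nonneg (killedMass_nonneg hσ n) x)
      hsum.summable, hsum.tsum_eq]
  · intro n m hnm
    refine Set.disjoint_left.2 fun ω h1 h2 => ?_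
    rcases lt_or_gt_of_ne hnm with h | h
    · exact h2.1 n h (h1.2 ▸ hx)
    · exact h1.1 m h (h2.2 ▸ hx)
  · intro n
    refine MeasurableSet.inter ?_ (measurableSet_eval_eq n x)
    have : {ω : ℕ → Torus d N | ∀ k < n, ω k ∉ A} = ⋂ k < n, (fun ω => ω k) ⁻¹' Aᶜ := by
      ext ω
      simp
    change MeasurableSet {ω : ℕ → Torus d N | ∀ k < n, ω k ∉ A}
    rw [this]
    exact .biInter (Set.to_countable _) fun k _ =>
      measurable_pi_apply k (Set.to_countable _).measurableSet

theorem IsIIDExp.ae_pos {ν : Measure (ℕ → ℝ)} (hν : IsIIDExp ν) : ∀ᵐ g ∂ν, ∀ k, 0 < g k := by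
  have := hν.1
  rw [ae_all_iff]
  intro k
  have h := hν.2 k 0 fun _ => le_rfl
  simp only [Pi.zero_apply, Finset.sum_const_zero, neg_zero, Real.exp_zero,
    ENNReal.ofReal_one] at h
  have h1 : ν {g | 0 < g k} = 1 :=
    le_antisymm prob_le_one (h.ge.trans (measure_mono fun g hg => hg k le_rfl))
  exact (mem_ae_iff_prob_eq_one (measurableSet_lt measurable_const (measurable_pi_apply k))).2 h1

theorem strictMono_sum_range {g : ℕ → ℝ} (hg : ∀ k, 0 < g k) :
    StrictMono fun n => ∑ k ∈ Finset.range n, g k :=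
  strictMono_nat_of_lt_succ fun n => by
    rw [Finset.sum_range_succ]
    linarith [hg n]

theorem nJumps_sum_range {g : ℕ → ℝ} (hg : ∀ k, 0 < g k) (n : ℕ) :
    nJumps g (∑ k ∈ Finset.range n, g k) = n := by
  have : {m | ∑ k ∈ Finset.range m, g k ≤ ∑ k ∈ Finset.range n, g k} = Set.Iic n :=
    Set.ext fun m => (strictMono_sum_range hg).le_iff_le
  rw [nJumps, this, csSup_Iic]

theorem nJumps_lt {g : ℕ → ℝ} (hg : ∀ k, 0 < g k) {n : ℕ} {t : ℝ} (ht : 0 ≤ t)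
    (htn : t < ∑ k ∈ Finset.range n, g k) : nJumps g t < n := by
  have hb : ∀ m ∈ {m | ∑ k ∈ Finset.range m, g k ≤ t}, m < n := fun m hm =>
    (strictMono_sum_range hg).lt_iff_lt.1 (lt_of_le_of_lt hm htn)
  exact hb _ (Nat.sSup_mem ⟨0, by simpa using ht⟩ ⟨n, fun m hm => (hb m hm).le⟩)

theorem ctPos_hitT_eq_iff {A : Set (Torus d N)} {x : Torus d N} (hx : x ∈ A) {ω : CTPath d N}
    (hg : ∀ k, 0 < ω.2 k) : ctPos ω (hitT A ω) = x ↔ ω.1 ∈ entranceEvent A x := by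
  by_cases hA : ∃ n, ω.1 n ∈ A
  · have hn := Nat.find_spec hA
    have hlt : ∀ k < Nat.find hA, ω.1 k ∉ A := fun k hk => Nat.find_min hA hk
    set n := Nat.find hA
    have hT : hitT A ω = ∑ k ∈ Finset.range n, ω.2 k := by
      refine IsLeast.csInf_eq ⟨⟨Finset.sum_nonneg fun k _ => (hg k).le, ?_⟩, ?_⟩
      · rwa [ctPos, nJumps_sum_range hg]
      · rintro t ⟨ht0, ht⟩
        by_contra! h
        exact hlt _ (nJumps_lt hg ht0 h) ht
    rw [hT, ctPos, nJumps_sum_range hg]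
    constructor
    · exact fun h => ⟨n, hlt, h⟩
    · rintro ⟨m, hm, rfl⟩
      rcases lt_trichotomy m n with h | h | h
      · exact absurd hx (hlt m h)
      · rw [h]
      · exact absurd hn (hm n h)
  · push Not at hA
    constructor
    · rintro rfl
      exact absurd hx (hA _)
    · rintro ⟨m, -, rfl⟩
      exact absurd hx (hA _)

theorem IsCTWalk.measure_entrance (hd : 0 < d) (hN : 3 ≤ N) {A : Set (Torus d N)}
    (h0 : 0 ∈ A) {σ : Torus d N → ℝ} (hσ : ∀ x, 0 ≤ σ x) (hσA : ∀ x ∈ A, σ x = 0)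
    {P : Measure (CTPath d N)} (hP : IsCTWalk P fun z => ENNReal.ofReal (σ z))
    {x : Torus d N} (hx : x ∈ A) :
    P {ω | ctPos ω (hitT A ω) = x} = ENNReal.ofReal (avg (green A σ) x) := by
  obtain ⟨μ, ν, hμ, hν, rfl⟩ := hP
  have := hν.1
  have hae : ∀ᵐ ω ∂μ.prod ν, ∀ k, 0 < ω.2 k :=
    Measure.quasiMeasurePreserving_snd.ae hν.ae_pos
  have hset : ({ω | ctPos ω (hitT A ω) = x} : Set (CTPath d N)) =ᵐ[μ.prod ν]
      (entranceEvent A x ×ˢ Set.univ : Set (CTPath d N)) := by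
    filter_upwards [hae] with ω hω
    refine propext ((ctPos_hitT_eq_iff hx hω).trans ?_)
    exact ⟨fun h => ⟨h, trivial⟩, fun h => h.1⟩
  rw [measure_congr hset, Measure.prod_prod, measure_univ, mul_one,
    hμ.measure_entranceEvent hd hN h0 hσ hσA hx]

end Entrance

/-! ### Comparison with the equilibrium measure -/

section Comparison

variable {d : ℕ}

theorem IsEscape.avg_pos_of_mem_intBdry (hd : 3 ≤ d) {N : ℕ} {ρ : ℝ} (hρ : 0 ≤ ρ)
    (hN : 2 * (⌊ρ⌋₊ + 1) < N) {E : Lat d → ℝ} (hE : IsEscape ⌊ρ⌋₊ E) {x : Torus d N}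
    (hx : x ∈ intBdry adj (torusBall (0 : Torus d N) ρ)) : 0 < avg E (torusToLat x) := by
  have : NeZero N := ⟨by omega⟩
  have : Fact (1 < N) := ⟨by omega⟩
  obtain ⟨hxA, y, hyA, hxy⟩ := hx
  have hxc := (mem_torusBall_iff hρ x).1 hxA
  have hpos : ∀ z ∈ cube d (⌊ρ⌋₊ + 1), proj N z = y → 0 < E z / (2 * d) := fun z hz hzy =>
    div_pos (hE.pos hd fun h => hyA (hzy ▸ (proj_mem_torusBall_iff hρ hN hz).2 h))
      (by positivity)
  obtain ⟨i, h | h⟩ := (adj_iff one_ne_zero).1 hxy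
  · refine (hpos _ (add_single_mem_cube hxc i) ?_).trans_le (le_avg_add hE.nonneg _ i)
    rw [proj_add_single, proj_torusToLat, h]
  · refine (hpos _ (sub_single_mem_cube hxc i) ?_).trans_le (le_avg_sub hE.nonneg _ i)
    rw [proj_sub_single, proj_torusToLat, h]

theorem exists_entrance_estimate (hd : 3 ≤ d) : ∃ C : ℝ, 2 ≤ C ∧ ∀ (N ρ L : ℕ) (s R : ℝ), 0 ≤ s →
    ⌊s⌋₊ ≤ ρ → ρ + 1 ≤ L → 5 * d * (2 * L + 1) ≤ ⌊R⌋₊ → 2 * (⌊R⌋₊ + 1) < N →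
    C * (decayRatio d ⌊s⌋₊ ρ + (ρ + 1) / (L + 1)) ≤ 1 / 2 →
    ∀ σ : Torus d N → ℝ, IsQSD d N (torusBall (0 : Torus d N) R) σ →
    ∀ P : Measure (CTPath d N), IsCTWalk P (fun z => ENNReal.ofReal (σ z)) →
    ∀ c : ℝ, IsCap d (torusToLat '' torusBall (0 : Torus d N) s) c →
    ∀ x ∈ intBdry adj (torusBall (0 : Torus d N) s),
    ∀ μ : Measure (ℕ → Lat d), IsWalkLaw μ (pointInit (torusToLat x)) →
    |(P {ω | ctPos ω (hitT (torusBall (0 : Torus d N) s) ω) = x}).toReal * c /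
      (μ (escEvent (torusToLat '' torusBall (0 : Torus d N) s))).toReal - 1| ≤
      4 * (C * (decayRatio d ⌊s⌋₊ ρ + (ρ + 1) / (L + 1))) := by
  obtain ⟨C, hC, hcomp⟩ := exists_local_comparison hd
  refine ⟨C, hC, ?_⟩
  intro N ρ L s R hs hsρ hρL hLR hRN hξ σ ⟨hσ0, hσB, hσ1, _⟩ P hP c hc x hx μ hμ
  have hd0 : 0 < d := by omega
  have hLΛ : 2 * L + 1 ≤ 5 * d * (2 * L + 1) := Nat.le_mul_of_pos_left _ (by omega)
  have hN3 : 3 ≤ N := by omega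
  have : NeZero N := ⟨by omega⟩
  have hR : 0 ≤ R := by
    by_contra! h
    have := Nat.floor_of_nonpos h.le
    omega
  set r := ⌊s⌋₊ with hr
  set ξ := C * (decayRatio d r ρ + (ρ + 1) / (L + 1)) with hξdef
  have hξ0 : 0 ≤ ξ := by
    have := decayRatio_nonneg d r ρ
    positivity
  set A := torusBall (0 : Torus d N) s with hA
  have h0A : 0 ∈ A := (mem_torusBall_iff hs 0).2 fun i => by simp [torusToLat_apply]
  have hσA : ∀ y ∈ A, σ y = 0 := fun y hy =>
    hσB y ((mem_torusBall_iff hR y).2 (cube_mono (by omega) ((mem_torusBall_iff hs y).1 hy)))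
  obtain ⟨E, hE⟩ := exists_isEscape hd r
  have himg : torusToLat '' A = cube d r := torusToLat_image_torusBall hs (by omega)
  set u : Lat d → ℝ := fun y => green A σ (proj N y) with hu
  have havg : ∀ y, avg u y = avg (green A σ) (proj N y) := avg_comp_proj _
  have hgreen0 : ∀ y, 0 ≤ green A σ y := fun y => tsum_nonneg fun n => killedMass_nonneg hσ0 n y
  obtain ⟨a, ha, hau⟩ := hcomp r ρ L hsρ hρL u (fun y => hgreen0 _)
    ⟨∑ y, green A σ y, fun y =>
      Finset.single_le_sum (fun z _ => hgreen0 z) (Finset.mem_univ (proj N y))⟩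
    (fun y hy => green_eq_zero hσA ((proj_mem_torusBall_iff hs (by omega) hy).2 hy))
    (fun y hy hyr => by
      have hyR := cube_mono hLR hy
      have h1 : proj N y ∉ A := fun h =>
        hyr ((proj_mem_torusBall_iff hs (by omega) hyR).1 h)
      have h2 : σ (proj N y) = 0 :=
        hσB _ ((proj_mem_torusBall_iff hR (by omega) hyR).2 hyR)
      rw [havg, show u y = green A σ (proj N y) from rfl,
        green_eq hd0 (by omega) h0A hσ0 hσA h1, h2, zero_add])
    E hE hξ
  have hsum : ∑ y ∈ (finite_cube (d := d) r).toFinset, avg u y = 1 := by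
    rw [← hσ1, finsum_eq_sum_of_fintype, ← sum_avg_green hd0 (by omega) h0A hσ0 hσA]
    refine Finset.sum_nbij' (proj N) torusToLat (fun y hy => ?_) (fun y hy => ?_) (fun y hy => ?_)
      (fun y _ => proj_torusToLat y) (fun y _ => havg y)
    · rw [Set.Finite.mem_toFinset] at hy
      simpa using (proj_mem_torusBall_iff hs (by omega) hy).2 hy
    · rw [Set.Finite.mem_toFinset]
      exact (mem_torusBall_iff hs y).1 (by simpa using hy)
    · rw [Set.Finite.mem_toFinset] at hy
      exact torusToLat_proj (by omega) hy
  have hux : avg (green A σ) x = avg u (torusToLat x) := by rw [havg, proj_torusToLat]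
  rw [himg] at hc ⊢
  rw [hP.measure_entrance hd0 hN3 h0A hσ0 hσA hx.1, ENNReal.toReal_ofReal (avg_nonneg hgreen0 x),
    hμ.measure_escEvent_cube hd0 hE, hc.eq_sum hd0 hE, hux]
  refine abs_mul_div_sub_one_le _ ha hξ0 hξ hsum (fun y hy => ?_) (fun y hy => ?_) ?_
    (hE.avg_pos_of_mem_intBdry hd hs (by omega) hx)
  · exact (hau y ((Set.Finite.mem_toFinset _).1 hy)).1
  · exact (hau y ((Set.Finite.mem_toFinset _).1 hy)).2
  · exact (Set.Finite.mem_toFinset _).2 ((mem_torusBall_iff hs x).1 hx.1)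

theorem decayRatio_le_rpow (d : ℕ) {ε n s : ℝ} (hε : 0 < ε ∧ ε < 1) (hn : 1 ≤ n) (hs : 0 ≤ s)
    (hsn : s ≤ n ^ (1 - ε)) :
    decayRatio d ⌊s⌋₊ ⌊n ^ (1 - 3 * ε / 4)⌋₊ ≤ (d + 2000) * n ^ (-(ε / 8)) := by
  have hn0 : 0 < n := by linarith
  have h1 : (n ^ (1 - 3 * ε / 4)) ^ 2 ≤ ((⌊n ^ (1 - 3 * ε / 4)⌋₊ : ℝ) + 1) ^ 2 := by
    gcongr
    exact (Nat.lt_floor_add_one _).le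
  have h2 : d * (⌊s⌋₊ : ℝ) ^ 2 + 2000 ≤ (d + 2000) * (n ^ (1 - ε)) ^ 2 := by
    have h3 : (⌊s⌋₊ : ℝ) ^ 2 ≤ (n ^ (1 - ε)) ^ 2 := by
      gcongr
      exact (Nat.floor_le hs).trans hsn
    have h4 : 1 ≤ (n ^ (1 - ε)) ^ 2 := one_le_pow₀ (Real.one_le_rpow hn (by linarith [hε.2]))
    nlinarith [Nat.cast_nonneg (α := ℝ) d]
  have h5 : (((⌊n ^ (1 - 3 * ε / 4)⌋₊ : ℝ) + 1) ^ 2) ^ (-(1 / 4) : ℝ) ≤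
      n ^ (-(1 / 2) + 3 * ε / 8) := by
    refine (Real.rpow_le_rpow_of_nonpos (by positivity) h1 (by norm_num)).trans_eq ?_
    rw [← Real.rpow_natCast, ← Real.rpow_mul hn0.le, ← Real.rpow_mul hn0.le]
    congr 1
    push_cast
    ring
  have h6 : (d * (⌊s⌋₊ : ℝ) ^ 2 + 2000) ^ (1 / 4 : ℝ) ≤ (d + 2000) * n ^ (1 / 2 - ε / 2) := by
    refine (Real.rpow_le_rpow (by positivity) h2 (by norm_num)).trans ?_
    rw [Real.mul_rpow (by positivity) (by positivity)]
    refine mul_le_mul ?_ (le_of_eq ?_) (by positivity) (by positivity)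
    · have : (1 : ℝ) ≤ d + 2000 := by linarith [Nat.cast_nonneg (α := ℝ) d]
      exact (Real.rpow_le_rpow_of_exponent_le this (by norm_num)).trans_eq (Real.rpow_one _)
    · rw [← Real.rpow_natCast, ← Real.rpow_mul hn0.le, ← Real.rpow_mul hn0.le]
      congr 1
      push_cast
      ring
  rw [decayRatio, decayMin, Real.rpow_neg (x := d * (⌊s⌋₊ : ℝ) ^ 2 + 2000) (by positivity),
    div_inv_eq_mul]
  calc _ ≤ n ^ (-(1 / 2) + 3 * ε / 8) * ((d + 2000) * n ^ (1 / 2 - ε / 2)) := by gcongr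
    _ = (d + 2000) * (n ^ (-(1 / 2) + 3 * ε / 8) * n ^ (1 / 2 - ε / 2)) := by ring
    _ = _ := by
      rw [← Real.rpow_add hn0]
      congr 2
      ring

/-- A choice of two scales between `n ^ (1 - ε)` and `n ^ (1 - ε / 2)`. -/
theorem exists_scales (hd : 3 ≤ d) {ε : ℝ} (hε : 0 < ε ∧ ε < 1) {N : ℕ} (hN : 1 ≤ N)
    (hlarge : 60 * d ≤ (N : ℝ) ^ (ε / 4)) {s : ℝ} (hs : 0 ≤ s) (hsN : s ≤ (N : ℝ) ^ (1 - ε)) :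
    ∃ ρ L : ℕ, ⌊s⌋₊ ≤ ρ ∧ ρ + 1 ≤ L ∧ 5 * d * (2 * L + 1) ≤ ⌊(N : ℝ) ^ (1 - ε / 2)⌋₊ ∧
      2 * (⌊(N : ℝ) ^ (1 - ε / 2)⌋₊ + 1) < N ∧
      decayRatio d ⌊s⌋₊ ρ + (ρ + 1) / (L + 1) ≤ (41 * d + 2000) * (N : ℝ) ^ (-(ε / 8)) := by
  obtain ⟨hε0, hε1⟩ := hε
  set n : ℝ := (N : ℝ) with hndef
  have hn : 1 ≤ n := Nat.one_le_cast.2 hN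
  have hn0 : 0 < n := by linarith
  have hd3 : (3 : ℝ) ≤ d := by exact_mod_cast hd
  set a := n ^ (1 - 3 * ε / 4) with ha
  set b := n ^ (1 - ε / 2) with hb
  have ha1 : 1 ≤ a := Real.one_le_rpow hn (by linarith)
  have hb0 : 0 ≤ b := by positivity
  have hab : a * n ^ (ε / 4) = b := by
    rw [ha, hb, ← Real.rpow_add hn0]
    congr 1
    ring
  have hbn : b * n ^ (ε / 2) = n := by
    rw [hb, ← Real.rpow_add hn0, sub_add_cancel, Real.rpow_one]
  have h60 : 60 * d * a ≤ b := by nlinarith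
  have hb180 : 180 * b ≤ n := by
    have : n ^ (ε / 4) ≤ n ^ (ε / 2) := Real.rpow_le_rpow_of_exponent_le hn (by linarith)
    nlinarith
  have hL : b / (20 * d) < (⌊b / (20 * d)⌋₊ : ℝ) + 1 := Nat.lt_floor_add_one _
  have hL' : (⌊b / (20 * d)⌋₊ : ℝ) ≤ b / (20 * d) := Nat.floor_le (by positivity)
  have hρ : (⌊a⌋₊ : ℝ) ≤ a := Nat.floor_le (by linarith)
  have h3a : 3 * a ≤ b / (20 * d) := by
    rw [le_div_iff₀ (by positivity)]
    linarith
  refine ⟨⌊a⌋₊, ⌊b / (20 * d)⌋₊, ?_, ?_, ?_, ?_, ?_⟩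
  · exact Nat.floor_mono (hsN.trans (Real.rpow_le_rpow_of_exponent_le hn (by linarith)))
  · have : ((⌊a⌋₊ + 1 : ℕ) : ℝ) ≤ (⌊b / (20 * d)⌋₊ : ℝ) := by
      push_cast
      linarith
    exact_mod_cast this
  · refine Nat.le_floor ?_
    push_cast
    rw [le_div_iff₀ (by positivity)] at hL'
    nlinarith
  · have h1 : (⌊b⌋₊ : ℝ) ≤ b := Nat.floor_le hb0
    have : ((2 * (⌊b⌋₊ + 1) : ℕ) : ℝ) < (N : ℝ) := by
      push_cast
      nlinarith
    exact_mod_cast this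
  · have h1 := decayRatio_le_rpow d ⟨hε0, hε1⟩ hn hs hsN
    have h2 : ((⌊a⌋₊ : ℝ) + 1) / (⌊b / (20 * d)⌋₊ + 1) ≤ 40 * d * n ^ (-(ε / 8)) := by
      have h3 : n ^ (-(ε / 4)) ≤ n ^ (-(ε / 8)) :=
        Real.rpow_le_rpow_of_exponent_le hn (by linarith)
      have h4 : b * n ^ (-(ε / 4)) = a := by
        rw [← hab, mul_assoc, ← Real.rpow_add hn0, add_neg_cancel, Real.rpow_zero, mul_one]
      calc ((⌊a⌋₊ : ℝ) + 1) / (⌊b / (20 * d)⌋₊ + 1) ≤ (2 * a) / (b / (20 * d)) := by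
            gcongr
            linarith
        _ = 40 * d * n ^ (-(ε / 4)) := by
            have : 0 < b := by positivity
            rw [div_div_eq_mul_div, div_eq_iff this.ne', ← h4]
            ring
        _ ≤ _ := by gcongr
    calc _ ≤ (d + 2000) * n ^ (-(ε / 8)) + 40 * d * n ^ (-(ε / 8)) := add_le_add h1 h2
      _ = _ := by ring

end Comparison

/-- **Lemma (entrance law from the quasistationary distribution).**
With `A = B(0,r_N) ⊆ B = B(0,N^{1−ε/2})`, for all large `N`:
`sup_{x ∈ ∂_i A} | P_σ[Y_{H_A} = x] · cap(𝖠) / e_A(x) − 1 | ≤ c N^{−c'}`,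
where `σ` is the quasistationary distribution on `T ∖ B`, `𝖠 = φ(A)` and
`e_A(x) = e_𝖠(φ(x))` is the equilibrium measure. -/
theorem entrance_law_equilibrium
    (d : ℕ) (hd : 3 ≤ d) (ε : ℝ) (hε : 0 < ε ∧ ε < 1) :
    ∃ c c' : ℝ, 0 < c ∧ 0 < c' ∧ ∃ N₀ : ℕ, ∀ N : ℕ, N₀ ≤ N →
      ∀ rN : ℝ, 1 ≤ rN → rN ≤ (N : ℝ) ^ (1 - ε) →
        ∀ σ : Torus d N → ℝ,
          IsQSD d N (torusBall (0 : Torus d N) ((N : ℝ) ^ (1 - ε / 2))) σ →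
          ∀ Pσ : Measure (CTPath d N),
            IsCTWalk Pσ (fun z => ENNReal.ofReal (σ z)) →
            ∀ r : ℝ, IsCap d (torusToLat '' torusBall (0 : Torus d N) rN) r →
              ∀ x ∈ intBdry adj (torusBall (0 : Torus d N) rN),
                ∀ μx : Measure (ℕ → Lat d), IsWalkLaw μx (pointInit (torusToLat x)) →
                  |(Pσ {ω | ctPos ω (hitT (torusBall (0 : Torus d N) rN) ω) = x}).toReal * r /
                      (μx (escEvent (torusToLat '' torusBall (0 : Torus d N) rN))).toReal -
                    1| ≤ c * (N : ℝ) ^ (-c') := by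
  obtain ⟨C, hC, hest⟩ := exists_entrance_estimate hd
  set K : ℝ := C * (41 * d + 2000) with hK
  have hK0 : 0 < K := by positivity
  have hlarge : ∀ᶠ N : ℕ in atTop, 60 * (d : ℝ) ≤ (N : ℝ) ^ (ε / 4) :=
    ((tendsto_rpow_atTop (by linarith [hε.1])).comp tendsto_natCast_atTop_atTop).eventually_ge_atTop
      _
  have hsmall : ∀ᶠ N : ℕ in atTop, K * (N : ℝ) ^ (-(ε / 8)) ≤ 1 / 2 := by
    have h := (((tendsto_rpow_neg_atTop (by linarith [hε.1] : 0 < ε / 8)).comp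
      tendsto_natCast_atTop_atTop).const_mul K)
    rw [mul_zero] at h
    exact h.eventually_le_const (by norm_num)
  obtain ⟨N₀, hN₀⟩ := eventually_atTop.1 (hlarge.and (hsmall.and (eventually_ge_atTop 1)))
  refine ⟨4 * K, ε / 8, by positivity, by linarith [hε.1], N₀, ?_⟩
  intro N hN rN hr1 hrN σ hσ Pσ hPσ r hr x hx μx hμx
  obtain ⟨h1, h2, h3⟩ := hN₀ N hN
  obtain ⟨ρ, L, hsρ, hρL, hLR, hRN, hξ⟩ := exists_scales hd hε h3 h1 (by linarith) hrN
  have hξ' : C * (decayRatio d ⌊rN⌋₊ ρ + (ρ + 1) / (L + 1)) ≤ K * (N : ℝ) ^ (-(ε / 8)) := by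
    rw [hK, mul_assoc]
    gcongr
  refine (hest N ρ L rN _ (by linarith) hsρ hρL hLR hRN (hξ'.trans h2) σ hσ Pσ hPσ r hr x hx μx
    hμx).trans ?_
  linarith

end Frag
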